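/- arXiv:2312.06541 — 6 statements merged into one kernel-verified Lean document; each statement's English description precedes it below -/
import Mathlib

section
/- Let n ≥ 1, 0 < α ≤ 1, and let f, g : ℝ^n → ℝ be bounded with [f]_α, [g]_α < ∞. Then there is a constant C, depending only on n, α and the mollifier φ, such that for every ε > 0 one has ‖(fg)*φ_ε − (f*φ_ε)(g*φ_ε)‖₀ ≤ C ε^{2α} ‖f‖_α ‖g‖_α. -/
open MeasureTheory Metric

/-- Mollification `f * φ_ε` of a real-valued function on `ℝ^n`, where
`φ_ε(y) = ε^{-n} φ(y/ε)`. -/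
noncomputable def mollify (n : ℕ) (φ : EuclideanSpace ℝ (Fin n) → ℝ) (ε : ℝ)
    (f : EuclideanSpace ℝ (Fin n) → ℝ) (x : EuclideanSpace ℝ (Fin n)) : ℝ :=
  ∫ y, f (x - y) * ((ε ^ n)⁻¹ * φ (ε⁻¹ • y))

/-!
If `Z` is a random vector with density `φ`, then `(f * φ_ε)(x)` is the expectation of `f (x - ε Z)`,
so the commutator at `x` is the covariance of `f (x - ε Z)` and `g (x - ε Z)`. Since `‖Z‖ ≤ 1`
almost surely, the two variables stay within `[f]_α ε ^ α` of `f x` and `[g]_α ε ^ α` of `g x`, so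
these quantities bound their standard deviations, and the Cauchy–Schwarz inequality concludes.
-/

open ProbabilityTheory
open scoped NNReal ENNReal

theorem memLp_of_ae_norm_sub_const_le {Ω F : Type*} [MeasurableSpace Ω] [NormedAddCommGroup F]
    {μ : Measure Ω} [IsFiniteMeasure μ] {X : Ω → F} {c : F} {A : ℝ}
    (hX : AEStronglyMeasurable X μ) (hXc : ∀ᵐ ω ∂μ, ‖X ω - c‖ ≤ A) (p : ℝ≥0∞) : MemLp X p μ := by
  have h : MemLp (fun ω => X ω - c) p μ := .of_bound (hX.sub aestronglyMeasurable_const) A hXc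
  simpa only [Pi.add_def, sub_add_cancel] using h.add (memLp_const c)

section Covariance

variable {Ω : Type*} [MeasurableSpace Ω] {μ : Measure Ω} {X Y : Ω → ℝ}

theorem sq_covariance_le_variance_mul_variance [IsFiniteMeasure μ] (hX : MemLp X 2 μ)
    (hY : MemLp Y 2 μ) : cov[X, Y; μ] ^ 2 ≤ Var[X; μ] * Var[Y; μ] := by
  have quadratic_nonneg (t : ℝ) :
      0 ≤ Var[X; μ] * (t * t) + 2 * cov[X, Y; μ] * t + Var[Y; μ] :=
    calc
      0 ≤ Var[t • X + Y; μ] := variance_nonneg _ _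
      _ = _ := by
        rw [variance_add (hX.const_smul t) hY, variance_smul, covariance_smul_left]
        ring
  have discriminant_nonpos := discrim_le_zero quadratic_nonneg
  rw [discrim] at discriminant_nonpos
  linarith

variable [IsProbabilityMeasure μ] {c d A B : ℝ}

theorem variance_le_sq_of_ae_abs_sub_const_le (hX : AEMeasurable X μ)
    (hXc : ∀ᵐ ω ∂μ, |X ω - c| ≤ A) : Var[X; μ] ≤ A ^ 2 :=
  calc
    Var[X; μ] ≤ ((c + A - (c - A)) / 2) ^ 2 := variance_le_sq_of_bounded
      (hXc.mono fun _ h => Set.mem_Icc_iff_abs_le.1 (abs_sub_comm c _ ▸ h)) hX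
    _ = A ^ 2 := by ring

theorem abs_covariance_le_mul_of_ae_abs_sub_const_le
    (hX : AEStronglyMeasurable X μ) (hY : AEStronglyMeasurable Y μ)
    (hXc : ∀ᵐ ω ∂μ, |X ω - c| ≤ A) (hYd : ∀ᵐ ω ∂μ, |Y ω - d| ≤ B) :
    |cov[X, Y; μ]| ≤ A * B := by
  have hA : 0 ≤ A := hXc.exists.elim fun _ h => (abs_nonneg _).trans h
  have hB : 0 ≤ B := hYd.exists.elim fun _ h => (abs_nonneg _).trans h
  refine abs_le_of_sq_le_sq ?_ (mul_nonneg hA hB)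
  calc
    cov[X, Y; μ] ^ 2 ≤ Var[X; μ] * Var[Y; μ] := sq_covariance_le_variance_mul_variance
      (memLp_of_ae_norm_sub_const_le hX hXc 2) (memLp_of_ae_norm_sub_const_le hY hYd 2)
    _ ≤ A ^ 2 * B ^ 2 := mul_le_mul
      (variance_le_sq_of_ae_abs_sub_const_le hX.aemeasurable hXc)
      (variance_le_sq_of_ae_abs_sub_const_le hY.aemeasurable hYd)
      (variance_nonneg _ _) (sq_nonneg A)
    _ = (A * B) ^ 2 := (mul_pow A B 2).symm

end Covariance

section Density

variable {Ω : Type*} [MeasurableSpace Ω] {μ : Measure Ω} {w : Ω → ℝ}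

theorem isProbabilityMeasure_withDensity_ofReal (hw_nonneg : 0 ≤ᵐ[μ] w)
    (hw_int : ∫ ω, w ω ∂μ = 1) :
    IsProbabilityMeasure (μ.withDensity fun ω => ENNReal.ofReal (w ω)) := by
  refine isProbabilityMeasure_iff.2 ?_
  rw [withDensity_apply _ MeasurableSet.univ, Measure.restrict_univ,
    ← ofReal_integral_eq_lintegral_ofReal (integrable_of_integral_eq_one hw_int) hw_nonneg,
    hw_int, ENNReal.ofReal_one]

theorem integral_withDensity_ofReal {E : Type*} [NormedAddCommGroup E] [NormedSpace ℝ E]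
    (hw : AEMeasurable w μ) (hw_nonneg : 0 ≤ᵐ[μ] w) (F : Ω → E) :
    ∫ ω, F ω ∂μ.withDensity (fun ω => ENNReal.ofReal (w ω)) = ∫ ω, w ω • F ω ∂μ := by
  rw [integral_withDensity_eq_integral_toReal_smul₀ hw.ennreal_ofReal
    (Filter.Eventually.of_forall fun _ => ENNReal.ofReal_lt_top)]
  refine integral_congr_ae (hw_nonneg.mono fun ω hω => ?_)
  simp only [ENNReal.toReal_ofReal hω]

theorem ae_withDensity_ofReal_mem_of_support_subset {s : Set Ω} (hw : AEMeasurable w μ)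
    (hs : Function.support w ⊆ s) :
    ∀ᵐ ω ∂μ.withDensity (fun ω => ENNReal.ofReal (w ω)), ω ∈ s := by
  refine (ae_withDensity_iff' hw.ennreal_ofReal).2 (Filter.Eventually.of_forall fun ω hω => hs ?_)
  exact fun h => hω (by rw [h, ENNReal.ofReal_zero])

end Density

section Holder

theorem holderWith_of_norm_sub_le {E F : Type*} [SeminormedAddCommGroup E]
    [SeminormedAddCommGroup F] {f : E → F} {M α : ℝ≥0}
    (hf : ∀ x y, ‖f x - f y‖ ≤ M * ‖x - y‖ ^ (α : ℝ)) : HolderWith M α f := by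
  intro x y
  simp only [← dist_eq_norm, ← coe_nndist] at hf
  rw [edist_nndist, edist_nndist, ← ENNReal.coe_rpow_of_nonneg _ α.coe_nonneg]
  exact_mod_cast hf x y

variable {E F : Type*} [NormedAddCommGroup E] [SeminormedAddCommGroup F] {f : E → F}

theorem nonneg_of_norm_sub_le_mul_rpow [Nontrivial E] {M α : ℝ}
    (hf : ∀ x y, ‖f x - f y‖ ≤ M * ‖x - y‖ ^ α) : 0 ≤ M := by
  obtain ⟨x, y, hxy⟩ := exists_pair_ne E
  exact nonneg_of_mul_nonneg_left ((norm_nonneg _).trans (hf x y))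
    (Real.rpow_pos_of_pos (norm_sub_pos_iff.2 hxy) α)

theorem exists_holderWith_eq_add [Nontrivial E] {M₀ M : ℝ} {α : ℝ≥0} (hf₀ : ∀ x, ‖f x‖ ≤ M₀)
    (hf : ∀ x y, ‖f x - f y‖ ≤ M * ‖x - y‖ ^ (α : ℝ)) :
    ∃ A : ℝ≥0, HolderWith A α f ∧ (A : ℝ) = M₀ + M := by
  lift M₀ to ℝ≥0 using (norm_nonneg _).trans (hf₀ 0)
  lift M to ℝ≥0 using nonneg_of_norm_sub_le_mul_rpow hf
  exact ⟨M₀ + M, (holderWith_of_norm_sub_le hf).mono le_add_self, NNReal.coe_add M₀ M⟩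

end Holder

section Mollification

variable {n : ℕ} {φ f : EuclideanSpace ℝ (Fin n) → ℝ} {ε : ℝ}

/-- The distribution of a random vector `Z` with density `φ`, for which `mollify n φ ε f x` is the
expectation of `f (x - ε • Z)`. It is a probability measure when `φ` is a mollifier. -/
noncomputable def mollifierLaw (φ : EuclideanSpace ℝ (Fin n) → ℝ) :
    Measure (EuclideanSpace ℝ (Fin n)) :=
  volume.withDensity fun z => ENNReal.ofReal (φ z)

theorem mollify_eq_integral_mollifierLaw (hφ : AEMeasurable φ) (hφ_nonneg : ∀ x, 0 ≤ φ x)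
    (hε : 0 < ε) (f : EuclideanSpace ℝ (Fin n) → ℝ) (x : EuclideanSpace ℝ (Fin n)) :
    mollify n φ ε f x = ∫ z, f (x - ε • z) ∂mollifierLaw φ := by
  have hεn : ε ^ n ≠ 0 := (pow_pos hε n).ne'
  calc
    mollify n φ ε f x
      = ∫ y, (fun z => f (x - ε • z) * ((ε ^ n)⁻¹ * φ z)) (ε⁻¹ • y) := by
        simp only [mollify, smul_inv_smul₀ hε.ne']
    _ = ε ^ n * ∫ z, f (x - ε • z) * ((ε ^ n)⁻¹ * φ z) := by
        rw [Measure.integral_comp_inv_smul_of_nonneg volume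
          (fun z => f (x - ε • z) * ((ε ^ n)⁻¹ * φ z)) hε.le, finrank_euclideanSpace_fin,
          smul_eq_mul]
    _ = ∫ z, φ z • f (x - ε • z) := by
        rw [← integral_const_mul]
        congr with z
        rw [smul_eq_mul]
        field_simp
    _ = ∫ z, f (x - ε • z) ∂mollifierLaw φ :=
        (integral_withDensity_ofReal hφ (Filter.Eventually.of_forall hφ_nonneg) _).symm

theorem ae_mollifierLaw_abs_sub_le {A α : ℝ≥0} (hf : HolderWith A α f)
    (hφ : AEMeasurable φ) (hφ_supp : Function.support φ ⊆ closedBall 0 1) (hε : 0 ≤ ε)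
    (x : EuclideanSpace ℝ (Fin n)) :
    ∀ᵐ z ∂mollifierLaw φ, |f (x - ε • z) - f x| ≤ A * ε ^ (α : ℝ) := by
  filter_upwards [ae_withDensity_ofReal_mem_of_support_subset hφ hφ_supp] with z hz
  refine hf.dist_le_of_le ?_
  rw [mem_closedBall_zero_iff] at hz
  rw [dist_eq_norm, sub_sub_cancel_left, norm_neg, norm_smul, Real.norm_of_nonneg hε]
  exact mul_le_of_le_one_right hε hz

end Mollification

theorem mollification_commutator_sup_estimate_general {n : ℕ}
    {φ f g : EuclideanSpace ℝ (Fin n) → ℝ} {α β A B : ℝ≥0} {ε : ℝ}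
    (hφ_supp : Function.support φ ⊆ closedBall 0 1) (hφ_nonneg : ∀ x, 0 ≤ φ x)
    (hφ_int : ∫ x, φ x = 1) (hα : 0 < α) (hβ : 0 < β) (hf : HolderWith A α f)
    (hg : HolderWith B β g) (hε : 0 < ε) (x : EuclideanSpace ℝ (Fin n)) :
    |mollify n φ ε (fun z => f z * g z) x - mollify n φ ε f x * mollify n φ ε g x|
      ≤ ε ^ (α + β : ℝ) * (A * B) := by
  have hφ : AEMeasurable φ := (integrable_of_integral_eq_one hφ_int).aemeasurable
  have : IsProbabilityMeasure (mollifierLaw φ) :=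
    isProbabilityMeasure_withDensity_ofReal (Filter.Eventually.of_forall hφ_nonneg) hφ_int
  have hf_cont : Continuous fun z => f (x - ε • z) := (hf.continuous hα).comp (by fun_prop)
  have hg_cont : Continuous fun z => g (x - ε • z) := (hg.continuous hβ).comp (by fun_prop)
  have hf_osc := ae_mollifierLaw_abs_sub_le hf hφ hφ_supp hε.le x
  have hg_osc := ae_mollifierLaw_abs_sub_le hg hφ hφ_supp hε.le x
  simp only [mollify_eq_integral_mollifierLaw hφ hφ_nonneg hε]
  calc
    _ = |cov[fun z => f (x - ε • z), fun z => g (x - ε • z); mollifierLaw φ]| := by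
      rw [covariance_eq_sub
        (memLp_of_ae_norm_sub_const_le hf_cont.aestronglyMeasurable hf_osc 2)
        (memLp_of_ae_norm_sub_const_le hg_cont.aestronglyMeasurable hg_osc 2)]
      rfl
    _ ≤ A * ε ^ (α : ℝ) * (B * ε ^ (β : ℝ)) :=
      abs_covariance_le_mul_of_ae_abs_sub_const_le hf_cont.aestronglyMeasurable
        hg_cont.aestronglyMeasurable hf_osc hg_osc
    _ = ε ^ (α + β : ℝ) * (A * B) := by
      rw [Real.rpow_add hε]
      ring

/-- the commutator estimate
`‖(fg)*φ_ε − (f*φ_ε)(g*φ_ε)‖₀ ≤ C ε^{2α} ‖f‖_α ‖g‖_α`, with a constant `C = C(n, α, φ)`. -/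
theorem mollification_commutator_sup_estimate
    (n : ℕ) (hn : 1 ≤ n) (α : ℝ) (hα0 : 0 < α) (hα1 : α ≤ 1)
    (φ : EuclideanSpace ℝ (Fin n) → ℝ)
    (hφ_smooth : ContDiff ℝ (⊤ : ℕ∞) φ)
    (hφ_supp : Function.support φ ⊆ Metric.closedBall 0 1)
    (hφ_nonneg : ∀ x, 0 ≤ φ x)
    (hφ_int : ∫ x, φ x = 1) :
    ∃ C : ℝ, 0 < C ∧
      ∀ (f g : EuclideanSpace ℝ (Fin n) → ℝ) (Mf₀ Mfα Mg₀ Mgα : ℝ),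
        (∀ x, |f x| ≤ Mf₀) →
        (∀ x y, |f x - f y| ≤ Mfα * ‖x - y‖ ^ α) →
        (∀ x, |g x| ≤ Mg₀) →
        (∀ x y, |g x - g y| ≤ Mgα * ‖x - y‖ ^ α) →
        ∀ ε : ℝ, 0 < ε →
          ∀ x, |mollify n φ ε (fun z => f z * g z) x
                  - mollify n φ ε f x * mollify n φ ε g x|
              ≤ C * ε ^ (2 * α) * ((Mf₀ + Mfα) * (Mg₀ + Mgα)) := by
  have : Nonempty (Fin n) := ⟨⟨0, hn⟩⟩
  lift α to ℝ≥0 using hα0.le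
  refine ⟨1, one_pos, fun f g Mf₀ Mfα Mg₀ Mgα hf₀ hf hg₀ hg ε hε x => ?_⟩
  obtain ⟨A, hfA, hA⟩ := exists_holderWith_eq_add (f := f) hf₀ hf
  obtain ⟨B, hgB, hB⟩ := exists_holderWith_eq_add (f := g) hg₀ hg
  simpa only [one_mul, two_mul, hA, hB] using mollification_commutator_sup_estimate_general
    hφ_supp hφ_nonneg hφ_int hα0 hα0 hfA hgB hε x
end

section
/- Let n ≥ 1, 0 < α ≤ 1, and let f, g : ℝ^n → ℝ be bounded with [f]_α, [g]_α < ∞. Then there is a constant C, depending only on n, α and the mollifier φ, such that for every ε ∈ (0,1] and every k ∈ {1,…,n} one has ‖∂_k[(fg)*φ_ε − (f*φ_ε)(g*φ_ε)]‖₀ ≤ C ε^{2α−1} ‖f‖_α ‖g‖_α. -/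
open MeasureTheory Metric

/-!
Scaling reduces the estimate to `ε = 1`: the commutator of `φ_ε` with `f, g` at `x` is the
commutator of `φ` with `f (ε ·), g (ε ·)` at `x / ε`, so each Hölder constant contributes a factor
`ε ^ α` and the chain rule a factor `ε⁻¹`. For `ε = 1`, since `∫ φ = 1`, subtracting the constants
`f x` and `g x` from `f` and `g` does not change the commutator. After this subtraction both
functions are bounded on the ball around `x` seen by `φ` by a multiple of their Hölder constants,
and each derivative can be put on the kernel.
-/

open ContinuousLinearMap (lsmul)
open scoped Convolution NNReal

theorem hasCompactSupport_of_support_subset_ball {X M : Type*} [PseudoMetricSpace X]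
    [ProperSpace X] [Zero M] {w : X → M} {c : X} {R : ℝ} (hsupp : Function.support w ⊆ ball c R) :
    HasCompactSupport w :=
  .of_support_subset_isCompact (isCompact_closedBall c R) (hsupp.trans ball_subset_closedBall)

section Holder

theorem holderWith_of_dist_le {X Y : Type*} [PseudoMetricSpace X] [PseudoMetricSpace Y]
    {M α : ℝ≥0} {f : X → Y} (hf : ∀ x y, dist (f x) (f y) ≤ M * dist x y ^ (α : ℝ)) :
    HolderWith M α f := by
  intro x y
  rw [edist_nndist, edist_nndist, ← ENNReal.coe_rpow_of_nonneg _ α.coe_nonneg]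
  exact_mod_cast hf x y

theorem exists_holderWith_le_add {E F : Type*} [NormedAddCommGroup E] [Nontrivial E]
    [SeminormedAddCommGroup F] {α : ℝ≥0} {f : E → F} {M₀ M : ℝ} (hf₀ : ∀ x, ‖f x‖ ≤ M₀)
    (hf : ∀ x y, ‖f x - f y‖ ≤ M * ‖x - y‖ ^ (α : ℝ)) :
    ∃ N : ℝ≥0, (N : ℝ) ≤ M₀ + M ∧ HolderWith N α f := by
  obtain ⟨v, hv⟩ := exists_ne (0 : E)
  have hM : 0 ≤ M := nonneg_of_mul_nonneg_left ((norm_nonneg _).trans (hf v 0))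
    (Real.rpow_pos_of_pos (norm_sub_pos_iff.2 hv) _)
  have hM₀ : 0 ≤ M₀ := (norm_nonneg _).trans (hf₀ 0)
  lift M to ℝ≥0 using hM
  exact ⟨M, le_add_of_nonneg_left hM₀,
    holderWith_of_dist_le fun x y => by simpa only [dist_eq_norm] using hf x y⟩

theorem holderWith_comp_smul {E F : Type*} [NormedAddCommGroup E] [NormedSpace ℝ E]
    [PseudoMetricSpace F] {M α : ℝ≥0} {f : E → F} (hf : HolderWith M α f) (c : ℝ) :
    HolderWith (M * ‖c‖₊ ^ (α : ℝ)) α fun x => f (c • x) := by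
  simpa [Function.comp_def] using hf.comp (holderWith_one.2 (lipschitzWith_smul (β := E) c))

end Holder

section Bilinear

variable {E F G H : Type*} [NormedAddCommGroup E] [NormedSpace ℝ E]
  [NormedAddCommGroup F] [NormedSpace ℝ F] [NormedAddCommGroup G] [NormedSpace ℝ G]
  [NormedAddCommGroup H] [NormedSpace ℝ H]

theorem norm_fderiv_bilinear_le (B : F →L[ℝ] G →L[ℝ] H) {u : E → F} {v : E → G} {x : E}
    (hu : DifferentiableAt ℝ u x) (hv : DifferentiableAt ℝ v x) :
    ‖fderiv ℝ (fun y => B (u y) (v y)) x‖ ≤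
      ‖B‖ * (‖u x‖ * ‖fderiv ℝ v x‖ + ‖fderiv ℝ u x‖ * ‖v x‖) := by
  rw [B.fderiv_of_bilinear hu hv, mul_add, ← mul_assoc, ← mul_assoc]
  refine norm_add_le_of_le ?_ ?_
  · exact (B.precompR E).le_of_opNorm₂_le_of_le (B.norm_precompR_le E) le_rfl le_rfl
  · exact (B.precompL E).le_of_opNorm₂_le_of_le (B.norm_precompL_le E) le_rfl le_rfl

end Bilinear

section Convolution

variable {E F G H : Type*} [NormedAddCommGroup E] [MeasurableSpace E] [BorelSpace E]
  [NormedAddCommGroup F] [NormedSpace ℝ F] [NormedAddCommGroup G] [NormedSpace ℝ G]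
  [NormedAddCommGroup H] [NormedSpace ℝ H] {μ : Measure E}

theorem norm_convolution_le [SecondCountableTopology E] [μ.IsAddLeftInvariant] [SFinite μ]
    (L : F →L[ℝ] G →L[ℝ] H) {w : E → F} {f : E → G} {R S : ℝ} {x : E}
    (hw : Integrable w μ) (hsupp : Function.support w ⊆ ball 0 R)
    (hf : AEStronglyMeasurable f μ) (hS : 0 ≤ S) (hfS : ∀ y ∈ ball x R, ‖f y‖ ≤ S) :
    ‖(w ⋆[L, μ] f) x‖ ≤ ‖L‖ * (∫ y, ‖w y‖ ∂μ) * S := by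
  simpa using dist_convolution_le' L (z₀ := 0) hS hw hsupp hf (by simpa using hfS)

section Kernel

variable [IsFiniteMeasureOnCompacts μ] {w : E → ℝ} {f : E → F}

theorem integrable_smul_comp_sub (hw : Continuous w) (hcw : HasCompactSupport w)
    (hf : Continuous f) (x : E) : Integrable (fun y => w y • f (x - y)) μ :=
  (hw.smul (hf.comp (continuous_const.sub continuous_id))).integrable_of_hasCompactSupport
    hcw.smul_right

theorem convolution_lsmul_sub_const [CompleteSpace F] (hw : Continuous w)
    (hcw : HasCompactSupport w) (hw1 : ∫ y, w y ∂μ = 1) (hf : Continuous f) (a : F) (x : E) :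
    (w ⋆[lsmul ℝ ℝ, μ] fun y => f y - a) x = (w ⋆[lsmul ℝ ℝ, μ] f) x - a := by
  simp only [convolution_lsmul, smul_sub]
  rw [integral_sub (integrable_smul_comp_sub hw hcw hf x)
    ((hw.integrable_of_hasCompactSupport hcw).smul_const a), integral_smul_const, hw1, one_smul]

theorem convolution_lsmul_clm_comp [CompleteSpace F] [CompleteSpace G] (T : F →L[ℝ] G)
    (hw : Continuous w) (hcw : HasCompactSupport w) (hf : Continuous f) (x : E) :
    (w ⋆[lsmul ℝ ℝ, μ] fun y => T (f y)) x = T ((w ⋆[lsmul ℝ ℝ, μ] f) x) := by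
  simp only [convolution_lsmul, ← map_smul]
  exact T.integral_comp_comm (integrable_smul_comp_sub hw hcw hf x)

end Kernel

end Convolution

section Derivative

variable {E F : Type*} [NormedAddCommGroup E] [NormedSpace ℝ E] [FiniteDimensional ℝ E]
  [MeasurableSpace E] [BorelSpace E] [NormedAddCommGroup F] [NormedSpace ℝ F]
  {μ : Measure E} [μ.IsAddHaarMeasure] {w : E → ℝ} {f : E → F} {R S : ℝ} {x : E}

theorem differentiableAt_convolution_lsmul (hw : ContDiff ℝ 1 w) (hcw : HasCompactSupport w)
    (hf : Continuous f) : DifferentiableAt ℝ (w ⋆[lsmul ℝ ℝ, μ] f) x :=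
  (hcw.hasFDerivAt_convolution_left _ hw hf.locallyIntegrable x).differentiableAt

theorem norm_convolution_lsmul_le (hw : Continuous w) (hsupp : Function.support w ⊆ ball 0 R)
    (hf : Continuous f) (hS : 0 ≤ S) (hfS : ∀ y ∈ ball x R, ‖f y‖ ≤ S) :
    ‖(w ⋆[lsmul ℝ ℝ, μ] f) x‖ ≤ (∫ y, ‖w y‖ ∂μ) * S := by
  have hwi := hw.integrable_of_hasCompactSupport (μ := μ)
    (hasCompactSupport_of_support_subset_ball hsupp)
  refine (norm_convolution_le (lsmul ℝ ℝ) hwi hsupp hf.aestronglyMeasurable hS hfS).trans ?_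
  rw [mul_assoc]
  exact mul_le_of_le_one_left (by positivity) ContinuousLinearMap.opNorm_lsmul_le

theorem norm_fderiv_convolution_lsmul_le (hw : ContDiff ℝ 1 w) (hsupp : tsupport w ⊆ ball 0 R)
    (hf : Continuous f) (hS : 0 ≤ S) (hfS : ∀ y ∈ ball x R, ‖f y‖ ≤ S) :
    ‖fderiv ℝ (w ⋆[lsmul ℝ ℝ, μ] f) x‖ ≤ (∫ y, ‖fderiv ℝ w y‖ ∂μ) * S := by
  have hcw := hasCompactSupport_of_support_subset_ball ((subset_tsupport w).trans hsupp)
  have hdw := (hw.continuous_fderiv one_ne_zero).integrable_of_hasCompactSupport (μ := μ)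
    (hcw.fderiv ℝ)
  rw [(hcw.hasFDerivAt_convolution_left _ hw hf.locallyIntegrable x).fderiv]
  refine (norm_convolution_le _ hdw ((support_fderiv_subset ℝ).trans hsupp)
    hf.aestronglyMeasurable hS hfS).trans ?_
  rw [mul_assoc]
  exact mul_le_of_le_one_left (by positivity)
    ((ContinuousLinearMap.norm_precompL_le _ _).trans ContinuousLinearMap.opNorm_lsmul_le)

end Derivative

section Commutator

variable {E F G H : Type*} [NormedAddCommGroup E] [MeasurableSpace E]
  [NormedAddCommGroup F] [NormedSpace ℝ F] [NormedAddCommGroup G] [NormedSpace ℝ G]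
  [NormedAddCommGroup H] [NormedSpace ℝ H]

/-- The commutator `B(f, g) * w - B(f * w, g * w)` of convolution with a kernel `w` and a bilinear
product `B`. For `B` the multiplication of `ℝ` it is `(fg) * w - (f * w)(g * w)`. -/
noncomputable def mollificationCommutator (B : F →L[ℝ] G →L[ℝ] H) (μ : Measure E) (w : E → ℝ)
    (f : E → F) (g : E → G) (x : E) : H :=
  (w ⋆[lsmul ℝ ℝ, μ] fun y => B (f y) (g y)) x
    - B ((w ⋆[lsmul ℝ ℝ, μ] f) x) ((w ⋆[lsmul ℝ ℝ, μ] g) x)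

namespace mollificationCommutator

variable (B : F →L[ℝ] G →L[ℝ] H) {μ : Measure E} {w : E → ℝ} {f : E → F} {g : E → G}

theorem flip : mollificationCommutator B.flip μ w g f = mollificationCommutator B μ w f g :=
  rfl

theorem sub_const_left [BorelSpace E] [IsFiniteMeasureOnCompacts μ] [CompleteSpace F]
    [CompleteSpace G] [CompleteSpace H] (hw : Continuous w) (hcw : HasCompactSupport w)
    (hw1 : ∫ y, w y ∂μ = 1) (hf : Continuous f) (hg : Continuous g) (a : F) :
    mollificationCommutator B μ w (fun y => f y - a) g = mollificationCommutator B μ w f g := by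
  have hsplit (x : E) : (w ⋆[lsmul ℝ ℝ, μ] fun y => B (f y - a) (g y)) x =
      (w ⋆[lsmul ℝ ℝ, μ] fun y => B (f y) (g y)) x - B a ((w ⋆[lsmul ℝ ℝ, μ] g) x) := by
    rw [← convolution_lsmul_clm_comp (B a) hw hcw hg]
    simp only [convolution_lsmul, map_sub, sub_apply, smul_sub]
    exact integral_sub
      (integrable_smul_comp_sub hw hcw ((B.continuous.comp hf).clm_apply hg) x)
      (integrable_smul_comp_sub hw hcw ((B a).continuous.comp hg) x)
  ext x
  simp only [mollificationCommutator]
  rw [hsplit, convolution_lsmul_sub_const hw hcw hw1 hf, map_sub, sub_apply]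
  abel

theorem sub_const [BorelSpace E] [IsFiniteMeasureOnCompacts μ] [CompleteSpace F]
    [CompleteSpace G] [CompleteSpace H] (hw : Continuous w) (hcw : HasCompactSupport w)
    (hw1 : ∫ y, w y ∂μ = 1) (hf : Continuous f) (hg : Continuous g) (a : F) (b : G) :
    mollificationCommutator B μ w (fun y => f y - a) (fun y => g y - b) =
      mollificationCommutator B μ w f g := by
  rw [sub_const_left B hw hcw hw1 hf (g := fun y => g y - b) (by fun_prop), ← flip,
    sub_const_left B.flip hw hcw hw1 hg hf, flip]

end mollificationCommutator

end Commutator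

section Estimate

variable {E F G H : Type*} [NormedAddCommGroup E] [NormedSpace ℝ E] [FiniteDimensional ℝ E]
  [MeasurableSpace E] [BorelSpace E] [NormedAddCommGroup F] [NormedSpace ℝ F]
  [NormedAddCommGroup G] [NormedSpace ℝ G] [NormedAddCommGroup H] [NormedSpace ℝ H]
  (B : F →L[ℝ] G →L[ℝ] H) {μ : Measure E} [μ.IsAddHaarMeasure]

/-- The `L¹`-normalised dilation `φ_ε = ε⁻ᵈ φ(· / ε)` of a kernel, where `d = dim E`. -/
noncomputable def dilatedKernel (φ : E → ℝ) (ε : ℝ) (y : E) : ℝ :=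
  (ε ^ Module.finrank ℝ E)⁻¹ * φ (ε⁻¹ • y)

theorem convolution_lsmul_dilatedKernel (φ : E → ℝ) {ε : ℝ} (hε : 0 < ε) (f : E → F) (x : E) :
    (dilatedKernel φ ε ⋆[lsmul ℝ ℝ, μ] f) x =
      (φ ⋆[lsmul ℝ ℝ, μ] fun y => f (ε • y)) (ε⁻¹ • x) := by
  have hsubst (y : E) : dilatedKernel φ ε y • f (x - y) =
      (ε ^ Module.finrank ℝ E)⁻¹ • φ (ε⁻¹ • y) • f (ε • (ε⁻¹ • x - ε⁻¹ • y)) := by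
    rw [← smul_sub, smul_inv_smul₀ hε.ne', dilatedKernel, mul_smul]
  simp only [convolution_lsmul, hsubst]
  rw [integral_smul, Measure.integral_comp_inv_smul_of_nonneg μ
    (fun y => φ y • f (ε • (ε⁻¹ • x - y))) hε.le, inv_smul_smul₀ (by positivity)]

namespace mollificationCommutator

theorem dilatedKernel_eq_comp_smul (φ : E → ℝ) {ε : ℝ} (hε : 0 < ε) (f : E → F) (g : E → G) :
    mollificationCommutator B μ (dilatedKernel φ ε) f g = fun x =>
      mollificationCommutator B μ φ (fun y => f (ε • y)) (fun y => g (ε • y)) (ε⁻¹ • x) := by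
  ext x
  simp only [mollificationCommutator, convolution_lsmul_dilatedKernel φ hε]

theorem norm_fderiv_le_of_norm_le {w : E → ℝ} {f : E → F} {g : E → G} {R S T : ℝ} {x : E}
    (hw : ContDiff ℝ 1 w) (hsupp : tsupport w ⊆ ball 0 R) (hf : Continuous f)
    (hg : Continuous g) (hS : 0 ≤ S) (hT : 0 ≤ T)
    (hfS : ∀ y ∈ ball x R, ‖f y‖ ≤ S) (hgT : ∀ y ∈ ball x R, ‖g y‖ ≤ T) :
    ‖fderiv ℝ (mollificationCommutator B μ w f g) x‖ ≤
      ‖B‖ * (∫ y, ‖fderiv ℝ w y‖ ∂μ) * (1 + 2 * ∫ y, ‖w y‖ ∂μ) * (S * T) := by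
  set K := ∫ y, ‖fderiv ℝ w y‖ ∂μ
  set L := ∫ y, ‖w y‖ ∂μ
  have hsupp' : Function.support w ⊆ ball 0 R := (subset_tsupport w).trans hsupp
  have hcw := hasCompactSupport_of_support_subset_ball hsupp'
  have hBfg : Continuous fun y => B (f y) (g y) := (B.continuous.comp hf).clm_apply hg
  have hdf := differentiableAt_convolution_lsmul (μ := μ) (x := x) hw hcw hf
  have hdg := differentiableAt_convolution_lsmul (μ := μ) (x := x) hw hcw hg
  have hBfg_le : ∀ y ∈ ball x R, ‖B (f y) (g y)‖ ≤ ‖B‖ * S * T := fun y hy =>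
    B.le_of_opNorm₂_le_of_le le_rfl (hfS y hy) (hgT y hy)
  calc ‖fderiv ℝ (mollificationCommutator B μ w f g) x‖
      ≤ ‖fderiv ℝ (w ⋆[lsmul ℝ ℝ, μ] fun y => B (f y) (g y)) x‖
        + ‖fderiv ℝ (fun z => B ((w ⋆[lsmul ℝ ℝ, μ] f) z) ((w ⋆[lsmul ℝ ℝ, μ] g) z)) x‖ := by
        refine (congrArg norm (fderiv_sub
          (differentiableAt_convolution_lsmul hw hcw hBfg) ?_)).trans_le (norm_sub_le _ _)
        exact (B.differentiableAt.comp x hdf).clm_apply hdg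
    _ ≤ K * (‖B‖ * S * T) + ‖B‖ * ((L * S) * (K * T) + (K * S) * (L * T)) := by
        refine add_le_add (norm_fderiv_convolution_lsmul_le hw hsupp hBfg (by positivity)
          hBfg_le) ((norm_fderiv_bilinear_le B hdf hdg).trans ?_)
        gcongr
        · exact norm_convolution_lsmul_le hw.continuous hsupp' hf hS hfS
        · exact norm_fderiv_convolution_lsmul_le hw hsupp hg hT hgT
        · exact norm_fderiv_convolution_lsmul_le hw hsupp hf hS hfS
        · exact norm_convolution_lsmul_le hw.continuous hsupp' hg hT hgT
    _ = ‖B‖ * K * (1 + 2 * L) * (S * T) := by ring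

theorem exists_norm_fderiv_le_of_holderWith [CompleteSpace F] [CompleteSpace G] [CompleteSpace H]
    {w : E → ℝ} (hw : ContDiff ℝ 1 w) (hcw : HasCompactSupport w) (hw1 : ∫ y, w y ∂μ = 1)
    {α : ℝ≥0} (hα : 0 < α) :
    ∃ C : ℝ, 0 < C ∧ ∀ (f : E → F) (g : E → G) (M N : ℝ≥0), HolderWith M α f → HolderWith N α g →
      ∀ x, ‖fderiv ℝ (mollificationCommutator B μ w f g) x‖ ≤ C * (M * N) := by
  obtain ⟨R, hR, hsupp⟩ := hcw.isBounded.subset_ball_lt 0 0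
  set A := ‖B‖ * (∫ y, ‖fderiv ℝ w y‖ ∂μ) * (1 + 2 * ∫ y, ‖w y‖ ∂μ)
  have : 0 ≤ A := by positivity
  refine ⟨(A + 1) * (R ^ (α : ℝ)) ^ 2, by positivity, fun f g M N hf hg x => ?_⟩
  have hfc := hf.continuous hα
  have hgc := hg.continuous hα
  rw [← sub_const B hw.continuous hcw hw1 hfc hgc (f x) (g x)]
  calc _ ≤ A * ((M * R ^ (α : ℝ)) * (N * R ^ (α : ℝ))) :=
        norm_fderiv_le_of_norm_le B hw hsupp (hfc.sub continuous_const)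
          (hgc.sub continuous_const) (by positivity) (by positivity)
          (fun y hy => by
            simpa [dist_eq_norm] using hf.dist_le_of_le (mem_ball.1 hy).le)
          (fun y hy => by
            simpa [dist_eq_norm] using hg.dist_le_of_le (mem_ball.1 hy).le)
    _ = A * (R ^ (α : ℝ)) ^ 2 * (M * N) := by ring
    _ ≤ (A + 1) * (R ^ (α : ℝ)) ^ 2 * (M * N) := by gcongr; linarith

end mollificationCommutator

theorem mollification_commutator_deriv_estimate_general [CompleteSpace F] [CompleteSpace G]
    [CompleteSpace H] {φ : E → ℝ} (hφ : ContDiff ℝ 1 φ) (hcφ : HasCompactSupport φ)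
    (hφ_int : ∫ x, φ x ∂μ = 1) {α : ℝ≥0} (hα : 0 < α) :
    ∃ C : ℝ, 0 < C ∧ ∀ (f : E → F) (g : E → G) (M N : ℝ≥0), HolderWith M α f → HolderWith N α g →
      ∀ ε : ℝ, 0 < ε → ∀ x,
        ‖fderiv ℝ (mollificationCommutator B μ (dilatedKernel φ ε) f g) x‖ ≤
          C * ε ^ (2 * α - 1 : ℝ) * (M * N) := by
  obtain ⟨C, hC, hest⟩ :=
    mollificationCommutator.exists_norm_fderiv_le_of_holderWith B hφ hcφ hφ_int hα
  refine ⟨C, hC, fun f g M N hf hg ε hε x => ?_⟩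
  have hpow : ε ^ (2 * α - 1 : ℝ) = ε⁻¹ * (ε ^ (α : ℝ) * ε ^ (α : ℝ)) := by
    rw [Real.rpow_sub_one hε.ne', two_mul, Real.rpow_add hε, div_eq_inv_mul]
  have hunit := hest _ _ _ _ (holderWith_comp_smul hf ε) (holderWith_comp_smul hg ε) (ε⁻¹ • x)
  rw [mollificationCommutator.dilatedKernel_eq_comp_smul B φ hε, fderiv_comp_smul, norm_smul,
    Real.norm_of_nonneg (by positivity)]
  refine (mul_le_mul_of_nonneg_left hunit (by positivity)).trans_eq ?_
  simp only [NNReal.coe_mul, NNReal.coe_rpow, coe_nnnorm, Real.norm_of_nonneg hε.le, hpow]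
  ring

end Estimate

theorem mollify_eq_convolution_dilatedKernel (n : ℕ) (φ f : EuclideanSpace ℝ (Fin n) → ℝ)
    (ε : ℝ) : mollify n φ ε f = dilatedKernel φ ε ⋆ f := by
  ext x
  simp only [mollify, convolution_lsmul, dilatedKernel, finrank_euclideanSpace_fin, smul_eq_mul,
    mul_comm]

theorem mollify_mul_sub_eq_mollificationCommutator (n : ℕ)
    (φ f g : EuclideanSpace ℝ (Fin n) → ℝ) (ε : ℝ) :
    (fun z => mollify n φ ε (fun w => f w * g w) z - mollify n φ ε f z * mollify n φ ε g z) =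
      mollificationCommutator (.mul ℝ ℝ) volume (dilatedKernel φ ε) f g := by
  simp only [mollify_eq_convolution_dilatedKernel]
  rfl

/-- the first-derivative commutator estimate
`‖∂_k[(fg)*φ_ε − (f*φ_ε)(g*φ_ε)]‖₀ ≤ C ε^{2α-1} ‖f‖_α ‖g‖_α` for `ε ∈ (0,1]` and every
coordinate direction `k`, with a constant `C = C(n, α, φ)`.  Here the partial derivative
`∂_k` is the classical partial derivative, expressed as the Fréchet derivative applied to
the `k`-th standard basis vector. -/
theorem mollification_commutator_deriv_estimate
    (n : ℕ) (hn : 1 ≤ n) (α : ℝ) (hα0 : 0 < α) (hα1 : α ≤ 1)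
    (φ : EuclideanSpace ℝ (Fin n) → ℝ)
    (hφ_smooth : ContDiff ℝ (⊤ : ℕ∞) φ)
    (hφ_supp : Function.support φ ⊆ Metric.closedBall 0 1)
    (hφ_nonneg : ∀ x, 0 ≤ φ x)
    (hφ_int : ∫ x, φ x = 1) :
    ∃ C : ℝ, 0 < C ∧
      ∀ (f g : EuclideanSpace ℝ (Fin n) → ℝ) (Mf₀ Mfα Mg₀ Mgα : ℝ),
        (∀ x, |f x| ≤ Mf₀) →
        (∀ x y, |f x - f y| ≤ Mfα * ‖x - y‖ ^ α) →
        (∀ x, |g x| ≤ Mg₀) →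
        (∀ x y, |g x - g y| ≤ Mgα * ‖x - y‖ ^ α) →
        ∀ ε : ℝ, 0 < ε → ε ≤ 1 →
          ∀ (k : Fin n) (x : EuclideanSpace ℝ (Fin n)),
            |fderiv ℝ (fun z => mollify n φ ε (fun w => f w * g w) z
                - mollify n φ ε f z * mollify n φ ε g z) x (EuclideanSpace.single k 1)|
              ≤ C * ε ^ (2 * α - 1) * ((Mf₀ + Mfα) * (Mg₀ + Mgα)) := by
  lift α to ℝ≥0 using hα0.le
  obtain ⟨C, hC, hest⟩ := mollification_commutator_deriv_estimate_general (μ := volume)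
    (.mul ℝ ℝ) (hφ_smooth.of_le (by exact_mod_cast le_top))
    (.of_support_subset_isCompact (isCompact_closedBall 0 1) hφ_supp) hφ_int
    (NNReal.coe_pos.1 hα0)
  refine ⟨C, hC, fun f g Mf₀ Mfα Mg₀ Mgα hf₀ hfα hg₀ hgα ε hε _ k x => ?_⟩
  have : Nonempty (Fin n) := ⟨k⟩
  obtain ⟨M, hM, hf⟩ := exists_holderWith_le_add (f := f) hf₀ hfα
  obtain ⟨N, hN, hg⟩ := exists_holderWith_le_add (f := g) hg₀ hgα
  rw [mollify_mul_sub_eq_mollificationCommutator, ← Real.norm_eq_abs]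
  refine (ContinuousLinearMap.unit_le_opNorm _ _ (by simp)).trans
    ((hest f g M N hf hg ε hε x).trans ?_)
  gcongr
  exact M.coe_nonneg.trans hM
end

section
/- Let Ω ⊆ ℝ^n be open, 0 < α ≤ 1, and let u : Ω → ℝ^q be a C^{1,α} immersion whose pullback metric g = (Du)ᵀDu is of class C² on Ω. Let K ⊂ Ω be compact and let r > 0 be such that the closed r-neighborhood K_r of K is contained in Ω. Then there is a constant C, depending only on n, q, α, the mollifier φ, ‖u‖_{C^{1,α}(K_r)} and ‖g‖_{C²(K_r)}, such that for every ε ∈ (0, min(r,1)) one has ‖g − (D(u*φ_ε))ᵀ D(u*φ_ε)‖_{C¹(K)} ≤ C ε^{2α−1}, where the C¹ norm on K is the sup on K of the matrix field and of all its first partial derivatives. -/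
open MeasureTheory Metric Function

/-- Mollification `u * φ_ε` of an `ℝ^q`-valued map on `ℝ^n`, where
`φ_ε(y) = ε^{-n} φ(y/ε)`, applied componentwise. -/
noncomputable def mollifyV (n q : ℕ) (φ : EuclideanSpace ℝ (Fin n) → ℝ) (ε : ℝ)
    (u : EuclideanSpace ℝ (Fin n) → EuclideanSpace ℝ (Fin q))
    (x : EuclideanSpace ℝ (Fin n)) : EuclideanSpace ℝ (Fin q) :=
  ∫ y, ((ε ^ n)⁻¹ * φ (ε⁻¹ • y)) • u (x - y)

/-- The pullback metric `(Du)ᵀ Du` of a map `u : ℝ^n → ℝ^q`, with entries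
`g_{ij} = Σ_a ∂_i u^a ∂_j u^a`. -/
noncomputable def pullbackMetric (n q : ℕ)
    (u : EuclideanSpace ℝ (Fin n) → EuclideanSpace ℝ (Fin q))
    (x : EuclideanSpace ℝ (Fin n)) : Fin n → Fin n → ℝ :=
  fun i j => ∑ a : Fin q,
    fderiv ℝ u x (EuclideanSpace.single i 1) a * fderiv ℝ u x (EuclideanSpace.single j 1) a

/-!
Write `w = φ_ε`, `p = Du` and `g = B(p, p)` with `B` the Gram form. The error splits as
`g - B(p ⋆ w, p ⋆ w) = (g - g ⋆ w) + (B(p, p) ⋆ w - B(p ⋆ w, p ⋆ w))`. The first term is small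
because `g` is smoother than `u`. The second is a commutator of Constantin-E-Titi type: since
`∫ w = 1`, subtracting the constant `p x` from `p` does not change it, so at `x` it is quadratic in
the oscillation of `p` over an `ε`-ball, hence `O(ε^{2α})`. Its derivative at `x` is a Leibniz
expression in `w` and `ψ = ∂w`; since `∫ ψ = 0`, constants drop out again, and `∫ |ψ| = O(ε⁻¹)`
gives `O(ε^{2α-1})`.
-/

section WeightedAverage

variable {X F G H : Type*} [TopologicalSpace X] [MeasurableSpace X] [OpensMeasurableSpace X]
  {μ : Measure X} [IsFiniteMeasureOnCompacts μ]
  [NormedAddCommGroup F] [NormedSpace ℝ F] [NormedAddCommGroup G] [NormedSpace ℝ G]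
  [NormedAddCommGroup H] [NormedSpace ℝ H]
  {w ψ : X → ℝ} {p : X → F} {q : X → G} {s : Set X} {a : F} {b : G} {P Q : ℝ}

lemma integrable_smul_of_hasCompactSupport (hw : Continuous w) (hwc : HasCompactSupport w)
    (hp : Continuous p) : Integrable (fun y => w y • p y) μ :=
  (hw.smul hp).integrable_of_hasCompactSupport hwc.smul_right

lemma norm_integral_smul_le_of_support (hw : Continuous w) (hwc : HasCompactSupport w) {C : ℝ}
    (hC : ∀ y ∈ support w, ‖p y‖ ≤ C) : ‖∫ y, w y • p y ∂μ‖ ≤ (∫ y, ‖w y‖ ∂μ) * C := by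
  rw [← integral_mul_const]
  refine norm_integral_le_of_norm_le
    ((hw.integrable_of_hasCompactSupport hwc).norm.mul_const C) (ae_of_all _ fun y => ?_)
  rw [norm_smul]
  by_cases hy : w y = 0
  · simp only [hy, norm_zero, zero_mul, le_refl]
  · exact mul_le_mul_of_nonneg_left (hC y hy) (norm_nonneg _)

lemma norm_integral_smul_bilin_le (B : F →L[ℝ] G →L[ℝ] H) (hw : Continuous w)
    (hwc : HasCompactSupport w) (hws : support w ⊆ s) (hP : ∀ y ∈ s, ‖p y‖ ≤ P)
    (hQ : ∀ y ∈ s, ‖q y‖ ≤ Q) :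
    ‖∫ y, w y • B (p y) (q y) ∂μ‖ ≤ (∫ y, ‖w y‖ ∂μ) * (‖B‖ * P * Q) :=
  norm_integral_smul_le_of_support hw hwc fun y hy =>
    B.le_of_opNorm₂_le_of_le le_rfl (hP y (hws hy)) (hQ y (hws hy))

lemma norm_bilin_integral_smul_le (B : F →L[ℝ] G →L[ℝ] H)
    (hw : Continuous w) (hwc : HasCompactSupport w) (hws : support w ⊆ s)
    (hψ : Continuous ψ) (hψc : HasCompactSupport ψ) (hψs : support ψ ⊆ s)
    (hP : ∀ y ∈ s, ‖p y‖ ≤ P) (hQ : ∀ y ∈ s, ‖q y‖ ≤ Q) :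
    ‖B (∫ y, w y • p y ∂μ) (∫ y, ψ y • q y ∂μ)‖ ≤
      ‖B‖ * ((∫ y, ‖w y‖ ∂μ) * P) * ((∫ y, ‖ψ y‖ ∂μ) * Q) :=
  B.le_of_opNorm₂_le_of_le le_rfl
    (norm_integral_smul_le_of_support hw hwc fun y hy => hP y (hws hy))
    (norm_integral_smul_le_of_support hψ hψc fun y hy => hQ y (hψs hy))

lemma integral_smul_sub_const [CompleteSpace F] (hw : Continuous w) (hwc : HasCompactSupport w)
    (hp : Continuous p) (a : F) :
    ∫ y, w y • (p y - a) ∂μ = ∫ y, w y • p y ∂μ - (∫ y, w y ∂μ) • a := by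
  simp only [smul_sub]
  rw [integral_sub (integrable_smul_of_hasCompactSupport hw hwc hp)
    (integrable_smul_of_hasCompactSupport hw hwc continuous_const), integral_smul_const]

variable [CompleteSpace F] [CompleteSpace G] [CompleteSpace H]

lemma integral_smul_bilin_sub_const (B : F →L[ℝ] G →L[ℝ] H) (hw : Continuous w)
    (hwc : HasCompactSupport w) (hp : Continuous p) (hq : Continuous q) (a : F) (b : G) :
    ∫ y, w y • B (p y - a) (q y - b) ∂μ =
      ∫ y, w y • B (p y) (q y) ∂μ - B (∫ y, w y • p y ∂μ) b - B a (∫ y, w y • q y ∂μ)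
        + (∫ y, w y ∂μ) • B a b := by
  have hwp : Integrable (fun y => w y • p y) μ := integrable_smul_of_hasCompactSupport hw hwc hp
  have hwq : Integrable (fun y => w y • q y) μ := integrable_smul_of_hasCompactSupport hw hwc hq
  have hleft : ∫ y, w y • B (p y) b ∂μ = B (∫ y, w y • p y ∂μ) b := by
    simpa using (B.flip b).integral_comp_comm hwp
  have hright : ∫ y, w y • B a (q y) ∂μ = B a (∫ y, w y • q y ∂μ) := by
    simpa using (B a).integral_comp_comm hwq
  have hexpand : ∀ y, w y • B (p y - a) (q y - b) =
      w y • (B (p y) (q y) - B (p y) b - B a (q y)) + w y • B a b := fun y => by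
    simp only [map_sub, sub_apply]
    module
  simp only [hexpand, smul_sub]
  have hint {f : X → H} (hf : Continuous f) : Integrable (fun y => w y • f y) μ :=
    integrable_smul_of_hasCompactSupport hw hwc hf
  rw [integral_add _ (hint continuous_const), integral_sub _ (hint (by fun_prop)),
    integral_sub (hint (by fun_prop)) (hint (by fun_prop)), hleft, hright, integral_smul_const]
  · exact (hint (by fun_prop)).sub (hint (by fun_prop))
  · exact ((hint (by fun_prop)).sub (hint (by fun_prop))).sub (hint (by fun_prop))

lemma integral_smul_bilin_sub_bilin_integral_smul (B : F →L[ℝ] G →L[ℝ] H) (hw : Continuous w)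
    (hwc : HasCompactSupport w) (hw1 : ∫ y, w y ∂μ = 1) (hp : Continuous p) (hq : Continuous q)
    (a : F) (b : G) :
    ∫ y, w y • B (p y) (q y) ∂μ - B (∫ y, w y • p y ∂μ) (∫ y, w y • q y ∂μ) =
      ∫ y, w y • B (p y - a) (q y - b) ∂μ
        - B (∫ y, w y • (p y - a) ∂μ) (∫ y, w y • (q y - b) ∂μ) := by
  rw [integral_smul_bilin_sub_const B hw hwc hp hq, integral_smul_sub_const hw hwc hp,
    integral_smul_sub_const hw hwc hq, hw1]
  simp only [one_smul, map_sub, sub_apply]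
  abel

lemma integral_smul_bilin_sub_leibniz (B : F →L[ℝ] G →L[ℝ] H)
    (hw : Continuous w) (hwc : HasCompactSupport w) (hw1 : ∫ y, w y ∂μ = 1)
    (hψ : Continuous ψ) (hψc : HasCompactSupport ψ) (hψ0 : ∫ y, ψ y ∂μ = 0)
    (hp : Continuous p) (hq : Continuous q) (a : F) (b : G) :
    ∫ y, ψ y • B (p y) (q y) ∂μ
        - (B (∫ y, w y • p y ∂μ) (∫ y, ψ y • q y ∂μ)
          + B (∫ y, ψ y • p y ∂μ) (∫ y, w y • q y ∂μ)) =
      ∫ y, ψ y • B (p y - a) (q y - b) ∂μ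
        - (B (∫ y, w y • (p y - a) ∂μ) (∫ y, ψ y • (q y - b) ∂μ)
          + B (∫ y, ψ y • (p y - a) ∂μ) (∫ y, w y • (q y - b) ∂μ)) := by
  rw [integral_smul_bilin_sub_const B hψ hψc hp hq, integral_smul_sub_const hw hwc hp,
    integral_smul_sub_const hw hwc hq, integral_smul_sub_const hψ hψc hp,
    integral_smul_sub_const hψ hψc hq, hw1, hψ0]
  simp only [one_smul, zero_smul, sub_zero, add_zero, map_sub, sub_apply]
  abel

lemma norm_integral_smul_bilin_sub_le (B : F →L[ℝ] G →L[ℝ] H) (hw : Continuous w)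
    (hwc : HasCompactSupport w) (hws : support w ⊆ s) (hw1 : ∫ y, w y ∂μ = 1)
    (hp : Continuous p) (hq : Continuous q) (hP : ∀ y ∈ s, ‖p y - a‖ ≤ P)
    (hQ : ∀ y ∈ s, ‖q y - b‖ ≤ Q) :
    ‖∫ y, w y • B (p y) (q y) ∂μ - B (∫ y, w y • p y ∂μ) (∫ y, w y • q y ∂μ)‖ ≤
      ((∫ y, ‖w y‖ ∂μ) + (∫ y, ‖w y‖ ∂μ) ^ 2) * (‖B‖ * P * Q) := by
  rw [integral_smul_bilin_sub_bilin_integral_smul B hw hwc hw1 hp hq a b]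
  refine (norm_sub_le_of_le (norm_integral_smul_bilin_le B hw hwc hws hP hQ)
    (norm_bilin_integral_smul_le B hw hwc hws hw hwc hws hP hQ)).trans_eq ?_
  ring

lemma norm_integral_smul_bilin_sub_leibniz_le (B : F →L[ℝ] G →L[ℝ] H)
    (hw : Continuous w) (hwc : HasCompactSupport w) (hws : support w ⊆ s) (hw1 : ∫ y, w y ∂μ = 1)
    (hψ : Continuous ψ) (hψc : HasCompactSupport ψ) (hψs : support ψ ⊆ s)
    (hψ0 : ∫ y, ψ y ∂μ = 0) (hp : Continuous p) (hq : Continuous q)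
    (hP : ∀ y ∈ s, ‖p y - a‖ ≤ P) (hQ : ∀ y ∈ s, ‖q y - b‖ ≤ Q) :
    ‖∫ y, ψ y • B (p y) (q y) ∂μ
        - (B (∫ y, w y • p y ∂μ) (∫ y, ψ y • q y ∂μ)
          + B (∫ y, ψ y • p y ∂μ) (∫ y, w y • q y ∂μ))‖ ≤
      (1 + 2 * ∫ y, ‖w y‖ ∂μ) * (∫ y, ‖ψ y‖ ∂μ) * (‖B‖ * P * Q) := by
  rw [integral_smul_bilin_sub_leibniz B hw hwc hw1 hψ hψc hψ0 hp hq a b]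
  refine (norm_sub_le_of_le (norm_integral_smul_bilin_le B hψ hψc hψs hP hQ)
    (norm_add_le_of_le (norm_bilin_integral_smul_le B hw hwc hws hψ hψc hψs hP hQ)
      (norm_bilin_integral_smul_le B hψ hψc hψs hw hwc hws hP hQ))).trans_eq ?_
  ring

end WeightedAverage

lemma exists_contDiff_hasCompactSupport_eqOn_ball {E F : Type*} [NormedAddCommGroup E]
    [NormedSpace ℝ E] [FiniteDimensional ℝ E] [NormedAddCommGroup F] [NormedSpace ℝ F]
    {k : ℕ∞} {f : E → F} {Ω : Set E} (hΩ : IsOpen Ω) (hf : ContDiffOn ℝ k f Ω)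
    {x : E} {ε r : ℝ} (hε : 0 < ε) (hεr : ε < r) (hball : closedBall x r ⊆ Ω) :
    ∃ h : E → F, ContDiff ℝ k h ∧ HasCompactSupport h ∧
      ∃ ρ, ε < ρ ∧ Set.EqOn h f (ball x ρ) := by
  obtain ⟨ρ, hερ, hρr⟩ := exists_between hεr
  let χ : ContDiffBump x := ⟨ρ, r, hε.trans hερ, hρr⟩
  have hsupp : tsupport (fun y => χ y • f y) ⊆ Ω :=
    ((tsupport_smul_subset_left _ _).trans χ.tsupport_eq.le).trans hball
  refine ⟨fun y => χ y • f y, contDiff_iff_contDiffAt.2 fun y => ?_,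
    χ.hasCompactSupport.smul_right, ρ, hερ, fun y hy => ?_⟩
  · by_cases hy : y ∈ Ω
    · exact χ.contDiff.contDiffAt.smul (hf.contDiffAt (hΩ.mem_nhds hy))
    · exact contDiffAt_const.congr_of_eventuallyEq
        (notMem_tsupport_iff_eventuallyEq.1 fun h => hy (hsupp h))
  · simp only [χ.one_of_mem_closedBall (ball_subset_closedBall hy), one_smul]

section Convolution

open scoped Convolution Topology
open ContinuousLinearMap (lsmul)

lemma sub_mem_closedBall_of_mem_closedBall_zero {E : Type*} [SeminormedAddCommGroup E] {x y : E}
    {ε : ℝ} (hy : y ∈ closedBall 0 ε) : x - y ∈ closedBall x ε := by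
  simpa [mem_closedBall_iff_norm] using hy

lemma support_fderiv_apply_subset_closedBall {E : Type*} [NormedAddCommGroup E] [NormedSpace ℝ E]
    {w : E → ℝ} {ε : ℝ} (hws : support w ⊆ closedBall 0 ε) (e : E) :
    support (fun y => fderiv ℝ w y e) ⊆ closedBall 0 ε :=
  (subset_tsupport _).trans ((tsupport_fderiv_apply_subset ℝ e).trans
    (closure_minimal hws isClosed_closedBall))

lemma smul_convolution_eventuallyEq {E F : Type*} [SeminormedAddCommGroup E] [MeasurableSpace E]
    {μ : Measure E} [NormedAddCommGroup F] [NormedSpace ℝ F] {w : E → ℝ} {f₁ f₂ : E → F} {x : E}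
    {ε ρ : ℝ} (hws : support w ⊆ closedBall 0 ε)
    (hερ : ε < ρ) (hf : Set.EqOn f₁ f₂ (ball x ρ)) :
    (w ⋆[lsmul ℝ ℝ, μ] f₁) =ᶠ[𝓝 x] (w ⋆[lsmul ℝ ℝ, μ] f₂) := by
  filter_upwards [ball_mem_nhds x (sub_pos.2 hερ)] with z hz
  refine integral_congr_ae (ae_of_all _ fun y => ?_)
  by_cases hy : w y = 0
  · simp only [hy, map_zero, zero_apply]
  · have hzy : z - y ∈ ball x ρ :=
      closedBall_subset_ball' (by linarith [mem_ball.1 hz])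
        (sub_mem_closedBall_of_mem_closedBall_zero (hws hy))
    simp only [hf hzy]

variable {E F G H : Type*} [NormedAddCommGroup E] [NormedSpace ℝ E]
  [MeasurableSpace E] [BorelSpace E] {μ : Measure E} [μ.IsAddHaarMeasure]
  [NormedAddCommGroup F] [NormedSpace ℝ F] [NormedAddCommGroup G] [NormedSpace ℝ G]
  [NormedAddCommGroup H] [NormedSpace ℝ H]
  {w : E → ℝ} {f : E → F}

lemma integral_norm_fderiv_apply_le (hw : ContDiff ℝ 1 w) (hwc : HasCompactSupport w) (e : E) :
    ∫ y, ‖fderiv ℝ w y e‖ ∂μ ≤ (∫ y, ‖fderiv ℝ w y‖ ∂μ) * ‖e‖ := by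
  have hw' := hw.continuous_fderiv one_ne_zero
  rw [← integral_mul_const]
  refine integral_mono ?_ ?_ fun y => (fderiv ℝ w y).le_opNorm e
  · exact ((hw'.clm_apply continuous_const).integrable_of_hasCompactSupport
      (hwc.fderiv_apply ℝ e)).norm
  · exact (hw'.integrable_of_hasCompactSupport (hwc.fderiv ℝ)).norm.mul_const _

variable [FiniteDimensional ℝ E]

lemma fderiv_smul_convolution_right (hw : Continuous w) (hf : ContDiff ℝ 1 f)
    (hfc : HasCompactSupport f) (x : E) :
    fderiv ℝ (w ⋆[lsmul ℝ ℝ, μ] f) x = (w ⋆[lsmul ℝ ℝ, μ] fderiv ℝ f) x :=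
  (hfc.hasFDerivAt_convolution_right _ hw.locallyIntegrable hf x).fderiv

lemma fderiv_smul_convolution_right_apply (hw : Continuous w) (hf : ContDiff ℝ 1 f)
    (hfc : HasCompactSupport f) (x e : E) :
    fderiv ℝ (w ⋆[lsmul ℝ ℝ, μ] f) x e = (w ⋆[lsmul ℝ ℝ, μ] fun y => fderiv ℝ f y e) x := by
  rw [(hfc.hasFDerivAt_convolution_right _ hw.locallyIntegrable hf x).fderiv]
  exact convolution_precompR_apply _ hw.locallyIntegrable (hfc.fderiv ℝ)
    (hf.continuous_fderiv one_ne_zero) x e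

lemma integral_fderiv_apply_eq_zero (hw : ContDiff ℝ 1 w) (hwc : HasCompactSupport w) (e : E) :
    ∫ y, fderiv ℝ w y e ∂μ = 0 := by
  have hw' : Continuous fun y => fderiv ℝ w y e :=
    (hw.continuous_fderiv one_ne_zero).clm_apply continuous_const
  simpa using integral_mul_fderiv_eq_neg_fderiv_mul_of_integrable (μ := μ)
    (f := fun _ => (1 : ℝ)) (g := w) (v := e) (by simp)
    (by simpa using hw'.integrable_of_hasCompactSupport (hwc.fderiv_apply ℝ e))
    (by simpa using hw.continuous.integrable_of_hasCompactSupport hwc)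
    (fun _ _ => differentiableAt_const _) (fun y _ => hw.differentiable one_ne_zero y)

lemma differentiableAt_smul_convolution (hw : ContDiff ℝ 1 w) (hwc : HasCompactSupport w)
    (hf : Continuous f) (x : E) : DifferentiableAt ℝ (w ⋆[lsmul ℝ ℝ, μ] f) x :=
  (hwc.hasFDerivAt_convolution_left _ hw hf.locallyIntegrable x).differentiableAt

lemma fderiv_smul_convolution_left_apply (hw : ContDiff ℝ 1 w) (hwc : HasCompactSupport w)
    (hf : Continuous f) (x e : E) :
    fderiv ℝ (w ⋆[lsmul ℝ ℝ, μ] f) x e = ∫ y, fderiv ℝ w y e • f (x - y) ∂μ := by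
  have hexists : ConvolutionExistsAt (fderiv ℝ w) f x
      ((lsmul ℝ ℝ : ℝ →L[ℝ] F →L[ℝ] F).precompL E) μ :=
    (hwc.fderiv ℝ).convolutionExists_left _ (hw.continuous_fderiv one_ne_zero)
      hf.locallyIntegrable x
  rw [(hwc.hasFDerivAt_convolution_left _ hw hf.locallyIntegrable x).fderiv, convolution_def,
    ContinuousLinearMap.integral_apply hexists]
  rfl

variable {p : E → F} {q : E → G}

lemma differentiableAt_bilin_smul_convolution (B : F →L[ℝ] G →L[ℝ] H) (hw : ContDiff ℝ 1 w)
    (hwc : HasCompactSupport w) (hp : Continuous p) (hq : Continuous q) (x : E) :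
    DifferentiableAt ℝ (fun z => B ((w ⋆[lsmul ℝ ℝ, μ] p) z) ((w ⋆[lsmul ℝ ℝ, μ] q) z)) x :=
  (B.hasFDerivAt_of_bilinear (differentiableAt_smul_convolution hw hwc hp x).hasFDerivAt
    (differentiableAt_smul_convolution hw hwc hq x).hasFDerivAt).differentiableAt

lemma fderiv_bilin_smul_convolution_apply (B : F →L[ℝ] G →L[ℝ] H) (hw : ContDiff ℝ 1 w)
    (hwc : HasCompactSupport w) (hp : Continuous p) (hq : Continuous q) (x e : E) :
    fderiv ℝ (fun z => B ((w ⋆[lsmul ℝ ℝ, μ] p) z) ((w ⋆[lsmul ℝ ℝ, μ] q) z)) x e =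
      B (∫ y, w y • p (x - y) ∂μ) (∫ y, fderiv ℝ w y e • q (x - y) ∂μ)
        + B (∫ y, fderiv ℝ w y e • p (x - y) ∂μ) (∫ y, w y • q (x - y) ∂μ) := by
  rw [B.fderiv_of_bilinear (differentiableAt_smul_convolution hw hwc hp x)
    (differentiableAt_smul_convolution hw hwc hq x), add_apply,
    ContinuousLinearMap.precompR_apply, ContinuousLinearMap.precompL_apply,
    ContinuousLinearMap.compL_apply, ContinuousLinearMap.comp_apply,
    fderiv_smul_convolution_left_apply hw hwc hp, fderiv_smul_convolution_left_apply hw hwc hq]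
  rfl

variable [CompleteSpace F] [CompleteSpace G] [CompleteSpace H] {x : E} {ε r η P Q : ℝ}

lemma norm_sub_smul_convolution_le (hw : Continuous w) (hws : support w ⊆ closedBall 0 ε)
    (hw1 : ∫ y, w y ∂μ = 1) (hf : Continuous f) (hη : ∀ y ∈ closedBall x ε, ‖f y - f x‖ ≤ η) :
    ‖f x - (w ⋆[lsmul ℝ ℝ, μ] f) x‖ ≤ (∫ y, ‖w y‖ ∂μ) * η := by
  have hwc := HasCompactSupport.of_support_subset_isCompact (isCompact_closedBall 0 ε) hws
  have hfx : Continuous fun y => f (x - y) := hf.comp (continuous_sub_left x)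
  have herr : (w ⋆[lsmul ℝ ℝ, μ] f) x - f x = ∫ y, w y • (f (x - y) - f x) ∂μ := by
    rw [integral_smul_sub_const hw hwc hfx, hw1, one_smul]
    rfl
  rw [norm_sub_rev, herr]
  exact norm_integral_smul_le_of_support hw hwc fun y hy =>
    hη _ (sub_mem_closedBall_of_mem_closedBall_zero (hws hy))

theorem norm_bilin_sub_bilin_smul_convolution_le (B : F →L[ℝ] G →L[ℝ] H) (hw : Continuous w)
    (hws : support w ⊆ closedBall 0 ε) (hw1 : ∫ y, w y ∂μ = 1)
    (hp : Continuous p) (hq : Continuous q)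
    (hP : ∀ y ∈ closedBall x ε, ‖p y - p x‖ ≤ P) (hQ : ∀ y ∈ closedBall x ε, ‖q y - q x‖ ≤ Q)
    (hη : ∀ y ∈ closedBall x ε, ‖B (p y) (q y) - B (p x) (q x)‖ ≤ η) :
    ‖B (p x) (q x) - B ((w ⋆[lsmul ℝ ℝ, μ] p) x) ((w ⋆[lsmul ℝ ℝ, μ] q) x)‖ ≤
      (∫ y, ‖w y‖ ∂μ) * η + ((∫ y, ‖w y‖ ∂μ) + (∫ y, ‖w y‖ ∂μ) ^ 2) * (‖B‖ * P * Q) := by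
  have hwc := HasCompactSupport.of_support_subset_isCompact (isCompact_closedBall 0 ε) hws
  have hreg := norm_sub_smul_convolution_le (f := fun y => B (p y) (q y)) hw hws hw1
    (by fun_prop) hη
  have hcomm := norm_integral_smul_bilin_sub_le (μ := μ) B hw hwc hws hw1
    (hp.comp (continuous_sub_left x)) (hq.comp (continuous_sub_left x))
    (fun y hy => hP _ (sub_mem_closedBall_of_mem_closedBall_zero hy))
    (fun y hy => hQ _ (sub_mem_closedBall_of_mem_closedBall_zero hy))
  exact (norm_sub_le_norm_sub_add_norm_sub _ _ _).trans (add_le_add hreg hcomm)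

lemma norm_fderiv_apply_sub_integral_fderiv_smul_le (hw : ContDiff ℝ 1 w)
    (hws : support w ⊆ closedBall 0 ε) (hw1 : ∫ y, w y ∂μ = 1) {Ω : Set E} (hΩ : IsOpen Ω)
    (hf : ContDiffOn ℝ 1 f Ω) (hε : 0 < ε) (hεr : ε < r) (hball : closedBall x r ⊆ Ω) {e : E}
    (hη : ∀ y ∈ closedBall x ε, ‖fderiv ℝ f y e - fderiv ℝ f x e‖ ≤ η) :
    ‖fderiv ℝ f x e - ∫ y, fderiv ℝ w y e • f (x - y) ∂μ‖ ≤ (∫ y, ‖w y‖ ∂μ) * η := by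
  have hwc := HasCompactSupport.of_support_subset_isCompact (isCompact_closedBall 0 ε) hws
  obtain ⟨h, hh, hhc, ρ, hερ, hhf⟩ :=
    exists_contDiff_hasCompactSupport_eqOn_ball hΩ hf hε hεr hball
  have hDh : ∀ y ∈ closedBall x ε, fderiv ℝ h y = fderiv ℝ f y := fun y hy =>
    (hhf.eventuallyEq_of_mem
      (isOpen_ball.mem_nhds (closedBall_subset_ball hερ hy))).fderiv_eq
  have hDhx := hDh x (mem_closedBall_self hε.le)
  have hparts : (w ⋆[lsmul ℝ ℝ, μ] fun y => fderiv ℝ h y e) x =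
      ∫ y, fderiv ℝ w y e • f (x - y) ∂μ := by
    rw [← fderiv_smul_convolution_right_apply hw.continuous hh hhc,
      fderiv_smul_convolution_left_apply hw hwc hh.continuous]
    refine integral_congr_ae (ae_of_all _ fun y => ?_)
    by_cases hy : fderiv ℝ w y e = 0
    · simp only [hy, zero_smul]
    · simp only [hhf (closedBall_subset_ball hερ (sub_mem_closedBall_of_mem_closedBall_zero
        (support_fderiv_apply_subset_closedBall hws e hy)))]
  rw [← hparts, ← hDhx]
  refine norm_sub_smul_convolution_le hw.continuous hws hw1
    ((hh.continuous_fderiv one_ne_zero).clm_apply continuous_const) fun y hy => ?_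
  rw [hDh y hy, hDhx]
  exact hη y hy

theorem norm_fderiv_sub_fderiv_bilin_smul_convolution_le (B : F →L[ℝ] G →L[ℝ] H)
    (hw : ContDiff ℝ 1 w) (hws : support w ⊆ closedBall 0 ε) (hw1 : ∫ y, w y ∂μ = 1)
    (hp : Continuous p) (hq : Continuous q)
    (hP : ∀ y ∈ closedBall x ε, ‖p y - p x‖ ≤ P) (hQ : ∀ y ∈ closedBall x ε, ‖q y - q x‖ ≤ Q)
    {g : E → H} {Ω : Set E} (hΩ : IsOpen Ω) (hg : ContDiffOn ℝ 1 g Ω) (hε : 0 < ε) (hεr : ε < r)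
    (hball : closedBall x r ⊆ Ω) (hgB : ∀ y ∈ closedBall x ε, g y = B (p y) (q y)) {e : E}
    (hη : ∀ y ∈ closedBall x ε, ‖fderiv ℝ g y e - fderiv ℝ g x e‖ ≤ η) :
    ‖fderiv ℝ g x e
        - fderiv ℝ (fun z => B ((w ⋆[lsmul ℝ ℝ, μ] p) z) ((w ⋆[lsmul ℝ ℝ, μ] q) z)) x e‖ ≤
      (∫ y, ‖w y‖ ∂μ) * η
        + (1 + 2 * ∫ y, ‖w y‖ ∂μ) * (∫ y, ‖fderiv ℝ w y e‖ ∂μ) * (‖B‖ * P * Q) := by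
  have hwc := HasCompactSupport.of_support_subset_isCompact (isCompact_closedBall 0 ε) hws
  have hψs := support_fderiv_apply_subset_closedBall hws e
  have hreg := norm_fderiv_apply_sub_integral_fderiv_smul_le (μ := μ) hw hws hw1 hΩ hg hε hεr
    hball hη
  have hgBint : ∫ y, fderiv ℝ w y e • g (x - y) ∂μ =
      ∫ y, fderiv ℝ w y e • B (p (x - y)) (q (x - y)) ∂μ := by
    refine integral_congr_ae (ae_of_all _ fun y => ?_)
    by_cases hy : fderiv ℝ w y e = 0
    · simp only [hy, zero_smul]
    · simp only [hgB _ (sub_mem_closedBall_of_mem_closedBall_zero (hψs hy))]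
  have hcomm := norm_integral_smul_bilin_sub_leibniz_le (μ := μ) B hw.continuous hwc hws hw1
    ((hw.continuous_fderiv one_ne_zero).clm_apply continuous_const) (hwc.fderiv_apply ℝ e) hψs
    (integral_fderiv_apply_eq_zero hw hwc e)
    (hp.comp (continuous_sub_left x)) (hq.comp (continuous_sub_left x))
    (fun y hy => hP _ (sub_mem_closedBall_of_mem_closedBall_zero hy))
    (fun y hy => hQ _ (sub_mem_closedBall_of_mem_closedBall_zero hy))
  rw [hgBint] at hreg
  rw [fderiv_bilin_smul_convolution_apply B hw hwc hp hq]
  exact (norm_sub_le_norm_sub_add_norm_sub _ _ _).trans (add_le_add hreg hcomm)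

end Convolution

section PartialDerivatives

variable {ι E F : Type*} [Fintype ι] [NormedAddCommGroup E] [InnerProductSpace ℝ E]
  [NormedAddCommGroup F] [NormedSpace ℝ F]

lemma opNorm_le_sum_norm_orthonormalBasis (b : OrthonormalBasis ι ℝ E) (L : E →L[ℝ] F) :
    ‖L‖ ≤ ∑ i, ‖L (b i)‖ := by
  refine L.opNorm_le_bound (Finset.sum_nonneg fun _ _ => norm_nonneg _) fun v => ?_
  calc ‖L v‖ = ‖∑ i, inner ℝ (b i) v • L (b i)‖ := by
        conv_lhs => rw [← b.sum_repr' v]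
        simp only [map_sum, map_smul]
    _ ≤ ∑ i, ‖L (b i)‖ * ‖v‖ := norm_sum_le_of_le _ fun i _ => by
        rw [norm_smul, mul_comm]
        gcongr
        simpa only [b.norm_eq_one, one_mul] using norm_inner_le_norm (𝕜 := ℝ) (b i) v
    _ = (∑ i, ‖L (b i)‖) * ‖v‖ := (Finset.sum_mul ..).symm

lemma norm_sub_le_of_norm_fderiv_orthonormalBasis_le (b : OrthonormalBasis ι ℝ E) {f : E → F}
    {x y : E} {ρ M : ℝ} (hf : ∀ z ∈ closedBall x ρ, DifferentiableAt ℝ f z)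
    (hM : ∀ z ∈ closedBall x ρ, ∀ i, ‖fderiv ℝ f z (b i)‖ ≤ M) (hy : y ∈ closedBall x ρ) :
    ‖f y - f x‖ ≤ Fintype.card ι * M * ρ := by
  have hx : x ∈ closedBall x ρ := mem_closedBall_self (dist_nonneg.trans hy)
  have hfderiv : ∀ z ∈ closedBall x ρ, ‖fderiv ℝ f z‖ ≤ Fintype.card ι * M := fun z hz =>
    (opNorm_le_sum_norm_orthonormalBasis b _).trans <|
      (Finset.sum_le_card_nsmul _ _ _ fun i _ => hM z hz i).trans_eq (nsmul_eq_mul _ _)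
  exact ((convex_closedBall x ρ).norm_image_sub_le_of_norm_fderiv_le hf hfderiv hx hy).trans <|
    mul_le_mul_of_nonneg_left (mem_closedBall_iff_norm.1 hy)
      ((norm_nonneg _).trans (hfderiv x hx))

end PartialDerivatives

section Mollifier

variable {E : Type*} [NormedAddCommGroup E] [NormedSpace ℝ E]

/-- The rescaled kernel `φ_ε(y) = ε^{-d} φ(y/ε)` on a `d`-dimensional space. -/
noncomputable def mollifier (φ : E → ℝ) (ε : ℝ) (y : E) : ℝ :=
  (ε ^ Module.finrank ℝ E)⁻¹ * φ (ε⁻¹ • y)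

variable {φ : E → ℝ} {ε : ℝ}

lemma contDiff_mollifier {k : WithTop ℕ∞} (hφ : ContDiff ℝ k φ) : ContDiff ℝ k (mollifier φ ε) :=
  contDiff_const.mul (hφ.comp (contDiff_const_smul _))

lemma support_mollifier_subset (hε : 0 < ε) (hφ : support φ ⊆ closedBall 0 1) :
    support (mollifier φ ε) ⊆ closedBall 0 ε := fun y hy => by
  have hy' : ε⁻¹ • y ∈ closedBall 0 1 := hφ (right_ne_zero_of_mul hy)
  rw [mem_closedBall_zero_iff, norm_smul, norm_inv, Real.norm_of_nonneg hε.le,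
    inv_mul_le_one₀ hε] at hy'
  exact mem_closedBall_zero_iff.2 hy'

lemma norm_mollifier (hε : 0 ≤ ε) (y : E) :
    ‖mollifier φ ε y‖ = mollifier (fun z => ‖φ z‖) ε y := by
  rw [mollifier, norm_mul, Real.norm_of_nonneg (by positivity), mollifier]

lemma norm_fderiv_mollifier (hε : 0 ≤ ε) (y : E) :
    ‖fderiv ℝ (mollifier φ ε) y‖ = ε⁻¹ * mollifier (fun z => ‖fderiv ℝ φ z‖) ε y := by
  have h : fderiv ℝ (mollifier φ ε) y =
      (ε ^ Module.finrank ℝ E)⁻¹ • ε⁻¹ • fderiv ℝ φ (ε⁻¹ • y) := by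
    rw [← fderiv_comp_smul]
    exact congrFun
      (fderiv_const_smul_field (f := fun z => φ (ε⁻¹ • z)) (ε ^ Module.finrank ℝ E)⁻¹) y
  rw [h, norm_smul, norm_smul, Real.norm_of_nonneg (by positivity),
    Real.norm_of_nonneg (by positivity), mollifier, mul_left_comm]

variable [MeasurableSpace E] [BorelSpace E] [FiniteDimensional ℝ E] {μ : Measure E}
  [μ.IsAddHaarMeasure]

lemma integral_mollifier (hε : 0 < ε) : ∫ y, mollifier φ ε y ∂μ = ∫ y, φ y ∂μ := by
  simp only [mollifier]
  rw [integral_const_mul, Measure.integral_comp_inv_smul_of_nonneg μ φ hε.le, smul_eq_mul,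
    inv_mul_cancel_left₀ (by positivity)]

lemma integral_norm_mollifier (hε : 0 < ε) : ∫ y, ‖mollifier φ ε y‖ ∂μ = ∫ y, ‖φ y‖ ∂μ := by
  simp only [norm_mollifier hε.le, integral_mollifier hε]

lemma integral_norm_fderiv_mollifier (hε : 0 < ε) :
    ∫ y, ‖fderiv ℝ (mollifier φ ε) y‖ ∂μ = ε⁻¹ * ∫ y, ‖fderiv ℝ φ y‖ ∂μ := by
  simp only [norm_fderiv_mollifier hε.le, integral_const_mul, integral_mollifier hε]

end Mollifier

section Rpow

variable {ε α : ℝ}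

lemma le_rpow_two_mul_sub_one (hε : 0 < ε) (hε1 : ε ≤ 1) (hα : α ≤ 1) : ε ≤ ε ^ (2 * α - 1) := by
  simpa only [Real.rpow_one] using
    Real.rpow_le_rpow_of_exponent_ge hε hε1 (by linarith : 2 * α - 1 ≤ 1)

lemma sq_rpow_eq_rpow_two_mul_sub_one_mul (hε : 0 < ε) : (ε ^ α) ^ 2 = ε ^ (2 * α - 1) * ε := by
  rw [← Real.rpow_mul_natCast hε.le, ← Real.rpow_add_one hε.ne']
  congr 1
  push_cast
  ring

lemma norm_sub_le_abs_mul_rpow_of_mem_closedBall {E F : Type*} [SeminormedAddCommGroup E]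
    [SeminormedAddCommGroup F] {f : E → F} {x y : E} {M : ℝ} (hα : 0 ≤ α)
    (hf : ‖f y - f x‖ ≤ M * ‖y - x‖ ^ α) (hy : y ∈ closedBall x ε) :
    ‖f y - f x‖ ≤ |M| * ε ^ α := by
  refine hf.trans ?_
  gcongr
  · exact le_abs_self M
  · exact mem_closedBall_iff_norm.1 hy

end Rpow

section PullbackMetric

open scoped Convolution Topology
open ContinuousLinearMap (lsmul)

/-- The Gram form `(S, T) ↦ (⟪S e_i, T e_j⟫)_{ij}`, the bilinear form whose diagonal value at
`(Du, Du)` is the pullback metric of `u`. -/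
noncomputable def gramForm (n : ℕ) (F : Type*) [NormedAddCommGroup F] [InnerProductSpace ℝ F] :
    (EuclideanSpace ℝ (Fin n) →L[ℝ] F) →L[ℝ] (EuclideanSpace ℝ (Fin n) →L[ℝ] F) →L[ℝ]
      (Fin n → Fin n → ℝ) :=
  LinearMap.mkContinuous₂
    (LinearMap.mk₂ ℝ
      (fun S T i j => inner ℝ (S (EuclideanSpace.single i 1)) (T (EuclideanSpace.single j 1)))
      (fun _ _ _ => funext₂ fun _ _ => inner_add_left _ _ _)
      (fun _ _ _ => funext₂ fun _ _ => real_inner_smul_left _ _ _)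
      (fun _ _ _ => funext₂ fun _ _ => inner_add_right _ _ _)
      (fun _ _ _ => funext₂ fun _ _ => real_inner_smul_right _ _ _))
    1 fun S T => by
      rw [one_mul]
      refine (pi_norm_le_iff_of_nonneg (by positivity)).2 fun i =>
        (pi_norm_le_iff_of_nonneg (by positivity)).2 fun j => (norm_inner_le_norm _ _).trans ?_
      gcongr
      · simpa using S.le_opNorm (EuclideanSpace.single i 1)
      · simpa using T.le_opNorm (EuclideanSpace.single j 1)

set_option maxSynthPendingDepth 3 in
lemma norm_gramForm_le_one (n : ℕ) (F : Type*) [NormedAddCommGroup F] [InnerProductSpace ℝ F] :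
    ‖gramForm n F‖ ≤ 1 :=
  LinearMap.mkContinuous₂_norm_le _ zero_le_one _

variable {n q : ℕ} {φ : EuclideanSpace ℝ (Fin n) → ℝ}
  {u : EuclideanSpace ℝ (Fin n) → EuclideanSpace ℝ (Fin q)}
  {Ω : Set (EuclideanSpace ℝ (Fin n))} {x : EuclideanSpace ℝ (Fin n)} {ε r : ℝ}

lemma pullbackMetric_eq_gramForm (u : EuclideanSpace ℝ (Fin n) → EuclideanSpace ℝ (Fin q))
    (x : EuclideanSpace ℝ (Fin n)) :
    pullbackMetric n q u x = gramForm n (EuclideanSpace ℝ (Fin q)) (fderiv ℝ u x) (fderiv ℝ u x) :=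
  funext₂ fun _ _ => Finset.sum_congr rfl fun _ _ => mul_comm _ _

lemma mollifyV_eq_convolution (ε : ℝ)
    (u : EuclideanSpace ℝ (Fin n) → EuclideanSpace ℝ (Fin q)) :
    mollifyV n q φ ε u = mollifier φ ε ⋆[lsmul ℝ ℝ] u := by
  ext1 x
  simp only [mollifyV, mollifier, finrank_euclideanSpace_fin, convolution_def,
    ContinuousLinearMap.lsmul_apply]

lemma exists_pullbackMetric_mollifyV_eventuallyEq (hφ : ContDiff ℝ 1 φ)
    (hφs : support φ ⊆ closedBall 0 1) (hΩ : IsOpen Ω) (hu : ContDiffOn ℝ 1 u Ω)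
    (hε : 0 < ε) (hεr : ε < r) (hball : closedBall x r ⊆ Ω) :
    ∃ p : EuclideanSpace ℝ (Fin n) → EuclideanSpace ℝ (Fin n) →L[ℝ] EuclideanSpace ℝ (Fin q),
      Continuous p ∧ Set.EqOn p (fderiv ℝ u) (closedBall x ε) ∧
      pullbackMetric n q (mollifyV n q φ ε u) =ᶠ[𝓝 x] fun z =>
        gramForm n _ ((mollifier φ ε ⋆[lsmul ℝ ℝ] p) z) ((mollifier φ ε ⋆[lsmul ℝ ℝ] p) z) := by
  obtain ⟨v, hv, hvc, ρ, hερ, hvu⟩ :=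
    exists_contDiff_hasCompactSupport_eqOn_ball hΩ hu hε hεr hball
  refine ⟨fderiv ℝ v, hv.continuous_fderiv one_ne_zero, fun y hy =>
    (hvu.eventuallyEq_of_mem (isOpen_ball.mem_nhds
      (closedBall_subset_ball hερ hy))).fderiv_eq, ?_⟩
  have hconv := smul_convolution_eventuallyEq (μ := volume) (support_mollifier_subset hε hφs)
    hερ hvu.symm
  filter_upwards [hconv.eventuallyEq_nhds] with z hz
  rw [pullbackMetric_eq_gramForm, mollifyV_eq_convolution, hz.fderiv_eq,
    fderiv_smul_convolution_right (contDiff_mollifier hφ).continuous hv hvc]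

theorem norm_pullbackMetric_sub_mollifyV_le (hφ : ContDiff ℝ 1 φ)
    (hφs : support φ ⊆ closedBall 0 1) (hφ1 : ∫ y, φ y = 1) (hΩ : IsOpen Ω)
    (hu : ContDiffOn ℝ 1 u Ω) (hε : 0 < ε) (hεr : ε < r) (hball : closedBall x r ⊆ Ω) {H η : ℝ}
    (hH : ∀ y ∈ closedBall x ε, ‖fderiv ℝ u y - fderiv ℝ u x‖ ≤ H)
    (hη : ∀ y ∈ closedBall x ε, ‖pullbackMetric n q u y - pullbackMetric n q u x‖ ≤ η) :
    ‖pullbackMetric n q u x - pullbackMetric n q (mollifyV n q φ ε u) x‖ ≤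
      (∫ y, ‖φ y‖) * η + ((∫ y, ‖φ y‖) + (∫ y, ‖φ y‖) ^ 2) * H ^ 2 := by
  obtain ⟨p, hp, hpu, hmoll⟩ :=
    exists_pullbackMetric_mollifyV_eventuallyEq hφ hφs hΩ hu hε hεr hball
  have hpx : p x = fderiv ℝ u x := hpu (mem_closedBall_self hε.le)
  have hpH : ∀ y ∈ closedBall x ε, ‖p y - p x‖ ≤ H := fun y hy => by
    rw [hpu hy, hpx]
    exact hH y hy
  have hcore := norm_bilin_sub_bilin_smul_convolution_le (gramForm n (EuclideanSpace ℝ (Fin q)))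
    (contDiff_mollifier hφ).continuous (support_mollifier_subset hε hφs)
    ((integral_mollifier hε).trans hφ1) hp hp hpH hpH (η := η) fun y hy => by
      simpa only [hpu hy, hpx, pullbackMetric_eq_gramForm] using hη y hy
  rw [hmoll.eq_of_nhds, pullbackMetric_eq_gramForm u, ← hpx]
  refine hcore.trans ?_
  rw [integral_norm_mollifier hε, mul_assoc ‖_‖, ← sq]
  gcongr
  exact mul_le_of_le_one_left (sq_nonneg H) (norm_gramForm_le_one n _)

lemma differentiableAt_pullbackMetric_mollifyV (hφ : ContDiff ℝ 1 φ)
    (hφs : support φ ⊆ closedBall 0 1) (hΩ : IsOpen Ω) (hu : ContDiffOn ℝ 1 u Ω)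
    (hε : 0 < ε) (hεr : ε < r) (hball : closedBall x r ⊆ Ω) :
    DifferentiableAt ℝ (pullbackMetric n q (mollifyV n q φ ε u)) x := by
  obtain ⟨p, hp, -, hmoll⟩ :=
    exists_pullbackMetric_mollifyV_eventuallyEq hφ hφs hΩ hu hε hεr hball
  exact hmoll.differentiableAt_iff.2 (differentiableAt_bilin_smul_convolution _
    (contDiff_mollifier hφ)
    (.of_support_subset_isCompact (isCompact_closedBall 0 ε) (support_mollifier_subset hε hφs))
    hp hp x)

theorem norm_fderiv_pullbackMetric_sub_mollifyV_le (hφ : ContDiff ℝ 1 φ)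
    (hφs : support φ ⊆ closedBall 0 1) (hφ1 : ∫ y, φ y = 1) (hΩ : IsOpen Ω)
    (hu : ContDiffOn ℝ 1 u Ω) (hg : ContDiffOn ℝ 1 (pullbackMetric n q u) Ω)
    (hε : 0 < ε) (hεr : ε < r) (hball : closedBall x r ⊆ Ω) {H η : ℝ} {e : EuclideanSpace ℝ (Fin n)}
    (hH : ∀ y ∈ closedBall x ε, ‖fderiv ℝ u y - fderiv ℝ u x‖ ≤ H)
    (hη : ∀ y ∈ closedBall x ε,
      ‖fderiv ℝ (pullbackMetric n q u) y e - fderiv ℝ (pullbackMetric n q u) x e‖ ≤ η) :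
    ‖fderiv ℝ (fun y => pullbackMetric n q u y - pullbackMetric n q (mollifyV n q φ ε u) y) x e‖ ≤
      (∫ y, ‖φ y‖) * η
        + (1 + 2 * ∫ y, ‖φ y‖) * (ε⁻¹ * (∫ y, ‖fderiv ℝ φ y‖) * ‖e‖) * H ^ 2 := by
  obtain ⟨p, hp, hpu, hmoll⟩ :=
    exists_pullbackMetric_mollifyV_eventuallyEq hφ hφs hΩ hu hε hεr hball
  have hpH : ∀ y ∈ closedBall x ε, ‖p y - p x‖ ≤ H := fun y hy => by
    rw [hpu hy, hpu (mem_closedBall_self hε.le)]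
    exact hH y hy
  have hw : ContDiff ℝ 1 (mollifier φ ε) := contDiff_mollifier hφ
  have hws : support (mollifier φ ε) ⊆ closedBall 0 ε := support_mollifier_subset hε hφs
  have hwc := HasCompactSupport.of_support_subset_isCompact (isCompact_closedBall 0 ε) hws
  have hcore := norm_fderiv_sub_fderiv_bilin_smul_convolution_le
    (gramForm n (EuclideanSpace ℝ (Fin q))) hw hws ((integral_mollifier hε).trans hφ1) hp hp
    hpH hpH hΩ hg hε hεr hball (fun y hy => by rw [pullbackMetric_eq_gramForm, hpu hy]) hη
  have hgx : DifferentiableAt ℝ (pullbackMetric n q u) x :=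
    (hg.differentiableOn one_ne_zero).differentiableAt
      (hΩ.mem_nhds (hball (mem_closedBall_self (hε.trans hεr).le)))
  rw [fderiv_fun_sub hgx (differentiableAt_pullbackMetric_mollifyV hφ hφs hΩ hu hε hεr hball),
    sub_apply, hmoll.fderiv_eq]
  refine hcore.trans ?_
  rw [integral_norm_mollifier hε, ← integral_norm_fderiv_mollifier hε, mul_assoc ‖_‖, ← sq]
  gcongr
  · exact integral_norm_fderiv_apply_le hw hwc e
  · exact mul_le_of_le_one_left (sq_nonneg H) (norm_gramForm_le_one n _)

theorem norm_pullbackMetric_sub_mollifyV_le_rpow (hφ : ContDiff ℝ 1 φ)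
    (hφs : support φ ⊆ closedBall 0 1) (hφ1 : ∫ y, φ y = 1) (hΩ : IsOpen Ω)
    (hu : ContDiffOn ℝ 1 u Ω) (hg : DifferentiableOn ℝ (pullbackMetric n q u) Ω)
    (hε : 0 < ε) (hε1 : ε ≤ 1) (hεr : ε < r) (hball : closedBall x r ⊆ Ω) {α Mu Mg : ℝ}
    (hα0 : 0 ≤ α) (hα1 : α ≤ 1)
    (hHolder : ∀ y ∈ closedBall x r, ‖fderiv ℝ u y - fderiv ℝ u x‖ ≤ Mu * ‖y - x‖ ^ α)
    (hMg : ∀ y ∈ closedBall x r, ∀ k,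
      ‖fderiv ℝ (pullbackMetric n q u) y (EuclideanSpace.single k 1)‖ ≤ Mg) :
    ‖pullbackMetric n q u x - pullbackMetric n q (mollifyV n q φ ε u) x‖ ≤
      ((∫ y, ‖φ y‖) * (n * |Mg|) + ((∫ y, ‖φ y‖) + (∫ y, ‖φ y‖) ^ 2) * Mu ^ 2)
        * ε ^ (2 * α - 1) := by
  have hsub : closedBall x ε ⊆ closedBall x r := closedBall_subset_closedBall hεr.le
  have hg' : ∀ y ∈ closedBall x ε, DifferentiableAt ℝ (pullbackMetric n q u) y := fun y hy =>
    hg.differentiableAt (hΩ.mem_nhds (hball (hsub hy)))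
  have hosc : ∀ y ∈ closedBall x ε,
      ‖pullbackMetric n q u y - pullbackMetric n q u x‖ ≤ n * Mg * ε := fun y hy => by
    simpa only [Fintype.card_fin] using
      norm_sub_le_of_norm_fderiv_orthonormalBasis_le (EuclideanSpace.basisFun (Fin n) ℝ) hg'
        (fun z hz k => by simpa only [EuclideanSpace.basisFun_apply] using hMg z (hsub hz) k) hy
  have hε_le := le_rpow_two_mul_sub_one hε hε1 hα1
  calc _ ≤ (∫ y, ‖φ y‖) * (n * Mg * ε)
          + ((∫ y, ‖φ y‖) + (∫ y, ‖φ y‖) ^ 2) * (|Mu| * ε ^ α) ^ 2 :=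
        norm_pullbackMetric_sub_mollifyV_le hφ hφs hφ1 hΩ hu hε hεr hball (fun y hy =>
          norm_sub_le_abs_mul_rpow_of_mem_closedBall hα0 (hHolder y (hsub hy)) hy) hosc
    _ ≤ (∫ y, ‖φ y‖) * (n * |Mg| * ε ^ (2 * α - 1))
          + ((∫ y, ‖φ y‖) + (∫ y, ‖φ y‖) ^ 2) * (Mu ^ 2 * (ε ^ (2 * α - 1) * 1)) := by
        rw [mul_pow, sq_abs, sq_rpow_eq_rpow_two_mul_sub_one_mul hε]
        gcongr
        exact le_abs_self Mg
    _ = _ := by ring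

theorem norm_fderiv_pullbackMetric_sub_mollifyV_le_rpow (hφ : ContDiff ℝ 1 φ)
    (hφs : support φ ⊆ closedBall 0 1) (hφ1 : ∫ y, φ y = 1) (hΩ : IsOpen Ω)
    (hu : ContDiffOn ℝ 1 u Ω) (hg : ContDiffOn ℝ 2 (pullbackMetric n q u) Ω)
    (hε : 0 < ε) (hε1 : ε ≤ 1) (hεr : ε < r) (hball : closedBall x r ⊆ Ω) {α Mu Mg : ℝ}
    (hα0 : 0 ≤ α) (hα1 : α ≤ 1)
    (hHolder : ∀ y ∈ closedBall x r, ‖fderiv ℝ u y - fderiv ℝ u x‖ ≤ Mu * ‖y - x‖ ^ α)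
    (l : Fin n) (hMg : ∀ y ∈ closedBall x r, ∀ k,
      ‖fderiv ℝ (fun z => fderiv ℝ (pullbackMetric n q u) z (EuclideanSpace.single l 1)) y
        (EuclideanSpace.single k 1)‖ ≤ Mg) :
    ‖fderiv ℝ (fun y => pullbackMetric n q u y - pullbackMetric n q (mollifyV n q φ ε u) y) x
        (EuclideanSpace.single l 1)‖ ≤
      ((∫ y, ‖φ y‖) * (n * |Mg|) + (1 + 2 * ∫ y, ‖φ y‖) * (∫ y, ‖fderiv ℝ φ y‖) * Mu ^ 2)
        * ε ^ (2 * α - 1) := by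
  have hsub : closedBall x ε ⊆ closedBall x r := closedBall_subset_closedBall hεr.le
  have hg' : ∀ y ∈ closedBall x ε, DifferentiableAt ℝ
      (fun z => fderiv ℝ (pullbackMetric n q u) z (EuclideanSpace.single l 1)) y := fun y hy =>
    (((hg.contDiffAt (hΩ.mem_nhds (hball (hsub hy)))).fderiv_right
      one_add_one_eq_two.le).differentiableAt one_ne_zero).clm_apply (differentiableAt_const _)
  have hosc : ∀ y ∈ closedBall x ε,
      ‖fderiv ℝ (pullbackMetric n q u) y (EuclideanSpace.single l 1)
        - fderiv ℝ (pullbackMetric n q u) x (EuclideanSpace.single l 1)‖ ≤ n * Mg * ε :=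
    fun y hy => by
      simpa only [Fintype.card_fin] using
        norm_sub_le_of_norm_fderiv_orthonormalBasis_le (EuclideanSpace.basisFun (Fin n) ℝ) hg'
          (fun z hz k => by simpa only [EuclideanSpace.basisFun_apply] using hMg z (hsub hz) k) hy
  have hε_le := le_rpow_two_mul_sub_one hε hε1 hα1
  calc _ ≤ (∫ y, ‖φ y‖) * (n * Mg * ε) + (1 + 2 * ∫ y, ‖φ y‖)
          * (ε⁻¹ * (∫ y, ‖fderiv ℝ φ y‖) * ‖EuclideanSpace.single l (1 : ℝ)‖)
          * (|Mu| * ε ^ α) ^ 2 :=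
        norm_fderiv_pullbackMetric_sub_mollifyV_le hφ hφs hφ1 hΩ hu (hg.of_le one_le_two) hε hεr
          hball (fun y hy =>
            norm_sub_le_abs_mul_rpow_of_mem_closedBall hα0 (hHolder y (hsub hy)) hy) hosc
    _ = (∫ y, ‖φ y‖) * (n * Mg * ε) + (1 + 2 * ∫ y, ‖φ y‖) * (∫ y, ‖fderiv ℝ φ y‖)
          * (Mu ^ 2 * ε ^ (2 * α - 1)) := by
        rw [mul_pow, sq_abs, sq_rpow_eq_rpow_two_mul_sub_one_mul hε, PiLp.norm_single,
          norm_one]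
        field_simp
    _ ≤ (∫ y, ‖φ y‖) * (n * |Mg| * ε ^ (2 * α - 1))
          + (1 + 2 * ∫ y, ‖φ y‖) * (∫ y, ‖fderiv ℝ φ y‖) * (Mu ^ 2 * ε ^ (2 * α - 1)) := by
        gcongr
        exact le_abs_self Mg
    _ = _ := by ring

end PullbackMetric

theorem pullback_metric_mollification_estimate_general
    (n q : ℕ) (α : ℝ) (hα0 : 0 ≤ α) (hα1 : α ≤ 1)
    (φ : EuclideanSpace ℝ (Fin n) → ℝ)
    (hφ : ContDiff ℝ 1 φ)
    (hφ_supp : Function.support φ ⊆ Metric.closedBall 0 1)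
    (hφ_int : ∫ x, φ x = 1)
    (Mu Mg : ℝ) :
    ∃ C : ℝ, 0 < C ∧
      ∀ (Ω : Set (EuclideanSpace ℝ (Fin n)))
        (u : EuclideanSpace ℝ (Fin n) → EuclideanSpace ℝ (Fin q))
        (K : Set (EuclideanSpace ℝ (Fin n))) (r : ℝ),
        IsOpen Ω → Metric.cthickening r K ⊆ Ω →
        ContDiffOn ℝ 1 u Ω →
        (∀ x ∈ Metric.cthickening r K, ∀ y ∈ Metric.cthickening r K,
          ‖fderiv ℝ u x - fderiv ℝ u y‖ ≤ Mu * ‖x - y‖ ^ α) →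
        ContDiffOn ℝ 2 (pullbackMetric n q u) Ω →
        (∀ x ∈ Metric.cthickening r K,
          (∀ k : Fin n,
            ‖fderiv ℝ (pullbackMetric n q u) x (EuclideanSpace.single k 1)‖ ≤ Mg) ∧
          (∀ k l : Fin n,
            ‖fderiv ℝ (fun y => fderiv ℝ (pullbackMetric n q u) y
                (EuclideanSpace.single l 1)) x (EuclideanSpace.single k 1)‖ ≤ Mg)) →
        ∀ ε : ℝ, 0 < ε → ε < min r 1 →
          (∀ x ∈ K,
            ‖pullbackMetric n q u x - pullbackMetric n q (mollifyV n q φ ε u) x‖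
              ≤ C * ε ^ (2 * α - 1)) ∧
          (∀ x ∈ K, ∀ k : Fin n,
            ‖fderiv ℝ (fun y => pullbackMetric n q u y
                  - pullbackMetric n q (mollifyV n q φ ε u) y) x
                (EuclideanSpace.single k 1)‖
              ≤ C * ε ^ (2 * α - 1)) := by
  set b := ∫ y, ‖φ y‖
  set d := ∫ y, ‖fderiv ℝ φ y‖
  set C₀ := b * (n * |Mg|) + (b + b ^ 2) * Mu ^ 2
  set C₁ := b * (n * |Mg|) + (1 + 2 * b) * d * Mu ^ 2
  refine ⟨max 1 (max C₀ C₁), by positivity,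
    fun Ω u K r hΩ hKr hu hHolder hg hMg ε hε hεr1 => ?_⟩
  obtain ⟨hεr, hε1⟩ := lt_min_iff.1 hεr1
  have hball : ∀ x ∈ K, closedBall x r ⊆ cthickening r K := fun x hx =>
    closedBall_subset_cthickening hx r
  have hHolder_x : ∀ x ∈ K, ∀ y ∈ closedBall x r,
      ‖fderiv ℝ u y - fderiv ℝ u x‖ ≤ Mu * ‖y - x‖ ^ α := fun x hx y hy =>
    hHolder y (hball x hx hy) x (self_subset_cthickening K hx)
  refine ⟨fun x hx => ?_, fun x hx l => ?_⟩
  · refine (norm_pullbackMetric_sub_mollifyV_le_rpow hφ hφ_supp hφ_int hΩ hu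
      (hg.differentiableOn two_ne_zero) hε hε1.le hεr ((hball x hx).trans hKr) hα0 hα1
      (hHolder_x x hx) fun y hy => (hMg y (hball x hx hy)).1).trans ?_
    gcongr
    exact (le_max_left C₀ C₁).trans (le_max_right _ _)
  · refine (norm_fderiv_pullbackMetric_sub_mollifyV_le_rpow hφ hφ_supp hφ_int hΩ hu hg hε hε1.le
      hεr ((hball x hx).trans hKr) hα0 hα1 (hHolder_x x hx) l
      fun y hy k => (hMg y (hball x hx hy)).2 k l).trans ?_
    gcongr
    exact (le_max_right C₀ C₁).trans (le_max_right _ _)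

/-- if `u : Ω → ℝ^q` is a `C^{1,α}` immersion whose pullback metric
`g = (Du)ᵀDu` is `C²`, `K ⊂ Ω` is compact and the closed `r`-neighborhood `K_r` of `K`
lies in `Ω`, then there is `C` depending only on `n, q, α, φ`, a bound `Mu` for
`‖u‖_{C^{1,α}(K_r)}` and a bound `Mg` for `‖g‖_{C²(K_r)}`, such that for `0 < ε < min(r,1)`
one has `‖g − (D(u*φ_ε))ᵀ D(u*φ_ε)‖_{C¹(K)} ≤ C ε^{2α−1}`, the `C¹` norm on `K` being the
sup on `K` of the matrix field and of all of its first partial derivatives. -/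
theorem pullback_metric_mollification_estimate
    (n q : ℕ) (hn : 1 ≤ n) (hq : 1 ≤ q) (α : ℝ) (hα0 : 0 < α) (hα1 : α ≤ 1)
    (φ : EuclideanSpace ℝ (Fin n) → ℝ)
    (hφ_smooth : ContDiff ℝ (⊤ : ℕ∞) φ)
    (hφ_supp : Function.support φ ⊆ Metric.closedBall 0 1)
    (hφ_nonneg : ∀ x, 0 ≤ φ x)
    (hφ_int : ∫ x, φ x = 1)
    (Mu Mg : ℝ) :
    ∃ C : ℝ, 0 < C ∧
      ∀ (Ω : Set (EuclideanSpace ℝ (Fin n)))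
        (u : EuclideanSpace ℝ (Fin n) → EuclideanSpace ℝ (Fin q))
        (K : Set (EuclideanSpace ℝ (Fin n))) (r : ℝ),
        IsOpen Ω → IsCompact K → K ⊆ Ω → 0 < r →
        Metric.cthickening r K ⊆ Ω →
        -- `u` is `C¹` on `Ω` and an immersion:
        ContDiffOn ℝ 1 u Ω →
        (∀ x ∈ Ω, Function.Injective (fderiv ℝ u x)) →
        -- `C^{1,α}(K_r)` bound for `u`:
        (∀ x ∈ Metric.cthickening r K, ‖u x‖ ≤ Mu ∧ ‖fderiv ℝ u x‖ ≤ Mu) →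
        (∀ x ∈ Metric.cthickening r K, ∀ y ∈ Metric.cthickening r K,
          ‖fderiv ℝ u x - fderiv ℝ u y‖ ≤ Mu * ‖x - y‖ ^ α) →
        -- the pullback metric `g` is `C²` on `Ω`, with `C²(K_r)` bound `Mg`:
        ContDiffOn ℝ 2 (pullbackMetric n q u) Ω →
        (∀ x ∈ Metric.cthickening r K,
          ‖pullbackMetric n q u x‖ ≤ Mg ∧
          (∀ k : Fin n,
            ‖fderiv ℝ (pullbackMetric n q u) x (EuclideanSpace.single k 1)‖ ≤ Mg) ∧
          (∀ k l : Fin n,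
            ‖fderiv ℝ (fun y => fderiv ℝ (pullbackMetric n q u) y
                (EuclideanSpace.single l 1)) x (EuclideanSpace.single k 1)‖ ≤ Mg)) →
        ∀ ε : ℝ, 0 < ε → ε < min r 1 →
          (∀ x ∈ K,
            ‖pullbackMetric n q u x - pullbackMetric n q (mollifyV n q φ ε u) x‖
              ≤ C * ε ^ (2 * α - 1)) ∧
          (∀ x ∈ K, ∀ k : Fin n,
            ‖fderiv ℝ (fun y => pullbackMetric n q u y
                  - pullbackMetric n q (mollifyV n q φ ε u) y) x
                (EuclideanSpace.single k 1)‖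
              ≤ C * ε ^ (2 * α - 1)) :=
  (pullback_metric_mollification_estimate_general n q α hα0.le hα1 φ (hφ_smooth.of_le (by simp))
    hφ_supp hφ_int Mu Mg).imp fun _ ⟨hC, h⟩ =>
      ⟨hC, fun Ω u K r hΩ _ _ _ hKr hu _ _ hHolder hg hMg => h Ω u K r hΩ hKr hu hHolder hg
        fun x hx => (hMg x hx).2⟩
end

section
/- Let Ω ⊆ ℝ^n be open and let u ∈ C¹(Ω, ℝ^q) be injective with Du(x) injective for every x ∈ Ω. Let K ⊂ Ω be compact. Then there exists ε* > 0 with ε* < dist(K, ℝ^n∖Ω) such that for every ε ∈ (0, ε*), the mollification u*φ_ε (which is defined and smooth on a neighborhood of K) is injective on K and D(u*φ_ε)(x) is injective for every x ∈ K; that is, the mollified map is again an embedding of K. -/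
open MeasureTheory Metric Function

/-!
Mollification is convolution with a probability measure `μ` concentrated in a small ball, so it
averages `u` over that ball. Since `D(u * μ) = Du * μ`, uniform continuity of `u` and of `Du` near
`K` makes `u * μ` as close to `u` in the `C¹` sense as desired, near `K`. Embeddings of `K` are
open for `C¹` closeness: if `f` is `C¹`-close to `u`, then near the diagonal of `K × K` it is
injective because its derivative stays close to a fixed injective linear map, and away from the
diagonal `f x ≠ f y` because `u x` and `u y` are a definite distance apart.
-/

open Filter Set
open scoped Topology NNReal

section MeasureConv

variable {E F : Type*} [NormedAddCommGroup E] [MeasurableSpace E] [NormedAddCommGroup F]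
  {u : E → F} {μ : Measure E} {δ : ℝ} {x : E}

theorem integrable_comp_sub_of_continuousOn_closedBall [BorelSpace E] [ProperSpace E]
    [IsFiniteMeasure μ] (hμ : ∀ᵐ y ∂μ, y ∈ closedBall 0 δ) (hu : ContinuousOn u (closedBall x δ)) :
    Integrable (fun y => u (x - y)) μ := by
  have hcont : ContinuousOn (fun y => u (x - y)) (closedBall 0 δ) :=
    hu.comp (by fun_prop) fun y hy => by simpa [dist_eq_norm] using hy
  rw [← Measure.restrict_eq_self_of_ae_mem hμ]
  exact hcont.integrableOn_compact (isCompact_closedBall 0 δ)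

variable [NormedSpace ℝ F]

/-- The convolution `u * μ` of a vector-valued map with a measure. Mathlib's `convolution`
multiplies two functions by a bilinear map, and its `Measure.conv` takes two measures. -/
noncomputable def measureConv (u : E → F) (μ : Measure E) (x : E) : F :=
  ∫ y, u (x - y) ∂μ

theorem norm_measureConv_sub_le [CompleteSpace F] [IsProbabilityMeasure μ] {a : F} {C : ℝ}
    (hμ : ∀ᵐ y ∂μ, y ∈ closedBall 0 δ) (hint : Integrable (fun y => u (x - y)) μ)
    (hC : ∀ z ∈ closedBall x δ, ‖u z - a‖ ≤ C) :
    ‖measureConv u μ x - a‖ ≤ C := by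
  have hsub : measureConv u μ x - a = ∫ y, (u (x - y) - a) ∂μ := by
    simp [measureConv, integral_sub hint (integrable_const a)]
  have hle : ∀ᵐ y ∂μ, ‖u (x - y) - a‖ ≤ C :=
    hμ.mono fun y hy => hC _ (by simpa [dist_eq_norm] using hy)
  simpa [hsub] using norm_integral_le_of_norm_le_const hle

theorem hasFDerivAt_measureConv [NormedSpace ℝ E] [BorelSpace E] [ProperSpace E]
    [IsFiniteMeasure μ] {Ω : Set E} (hΩ : IsOpen Ω) (hu : ContDiffOn ℝ 1 u Ω)
    (hμ : ∀ᵐ y ∂μ, y ∈ closedBall 0 δ) (hx : closedBall x δ ⊆ Ω) :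
    HasFDerivAt (measureConv u μ) (measureConv (fderiv ℝ u) μ x) x := by
  have hDu := hu.continuousOn_fderiv_of_isOpen hΩ le_rfl
  obtain ⟨ρ, hρ, hρΩ⟩ := (isCompact_closedBall x δ).exists_cthickening_subset_open hΩ hx
  have hball : ∀ x' ∈ ball x ρ, closedBall x' δ ⊆ cthickening ρ (closedBall x δ) :=
    fun x' hx' z hz => mem_cthickening_of_dist_le z (z + (x - x')) ρ _
      (by simpa [dist_eq_norm, add_sub_right_comm] using hz)
      (by simpa [dist_eq_norm, norm_sub_rev] using (mem_ball.1 hx').le)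
  obtain ⟨C, hC⟩ := (isCompact_closedBall x δ).cthickening.exists_bound_of_continuousOn
    (hDu.mono hρΩ)
  have hmem : ∀ᵐ y ∂μ, ∀ x' ∈ ball x ρ, x' - y ∈ cthickening ρ (closedBall x δ) :=
    hμ.mono fun y hy x' hx' => hball x' hx' (by simpa [dist_eq_norm] using hy)
  refine hasFDerivAt_integral_of_dominated_of_fderiv_le
    (F' := fun x' y => fderiv ℝ u (x' - y)) (bound := fun _ => C) (ball_mem_nhds x hρ) ?_
    (integrable_comp_sub_of_continuousOn_closedBall hμ (hu.continuousOn.mono hx))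
    (integrable_comp_sub_of_continuousOn_closedBall hμ (hDu.mono hx)).aestronglyMeasurable
    (hmem.mono fun y hy x' hx' => hC _ (hy x' hx')) (integrable_const C) ?_
  · filter_upwards [ball_mem_nhds x hρ] with x' hx'
    exact (integrable_comp_sub_of_continuousOn_closedBall hμ
      (hu.continuousOn.mono ((hball x' hx').trans hρΩ))).aestronglyMeasurable
  · refine hmem.mono fun y hy x' hx' => ?_
    have hdiff := (hu.contDiffAt (hΩ.mem_nhds (hρΩ (hy x' hx')))).differentiableAt one_ne_zero
    exact (hasFDerivAt_comp_sub y).2 hdiff.hasFDerivAt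

end MeasureConv

theorem exists_forall_closedBall_dist_le {X Y : Type*} [PseudoMetricSpace X] [PseudoMetricSpace Y]
    {u : X → Y} {L : Set X} (hL : IsCompact L) (hu : ∀ x ∈ L, ContinuousAt u x) {η : ℝ}
    (hη : 0 < η) : ∃ δ > 0, ∀ x ∈ L, ∀ z ∈ closedBall x δ, dist (u z) (u x) ≤ η := by
  obtain ⟨δ, hδ, h⟩ := Metric.mem_uniformity_dist.1
    (hL.uniformContinuousAt_of_continuousAt u hu (Metric.dist_mem_uniformity hη))
  refine ⟨δ / 2, half_pos hδ, fun x hx z hz => ?_⟩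
  have hxz : dist x z < δ := (mem_closedBall'.1 hz).trans_lt (half_lt_self hδ)
  have hu_lt : dist (u x) (u z) < η := h hxz hx
  exact (dist_comm (u z) (u x)).trans_le hu_lt.le

theorem eventually_ne_of_dist_le {X Y : Type*} [TopologicalSpace X] [MetricSpace Y] {u : X → Y}
    {V : Set X} {x y : X} (hux : ContinuousAt u x) (huy : ContinuousAt u y) (hxy : u x ≠ u y)
    (hVx : V ∈ 𝓝 x) (hVy : V ∈ 𝓝 y) :
    ∀ᶠ p : ℝ × X × X in 𝓝 (0, x, y), ∀ f : X → Y,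
      (∀ z ∈ V, dist (f z) (u z) ≤ p.1) → f p.2.1 ≠ f p.2.2 := by
  have hsep : ∀ᶠ p : ℝ × X × X in 𝓝 (0, x, y), 2 * p.1 < dist (u p.2.1) (u p.2.2) := by
    refine ContinuousAt.eventually_lt (by fun_prop) ?_ (by simpa using hxy)
    exact (hux.comp' (by fun_prop)).dist (huy.comp' (by fun_prop))
  filter_upwards [hsep, prod_mem_nhds univ_mem (prod_mem_nhds hVx hVy)]
    with ⟨η, x', y'⟩ hη ⟨_, hx', hy'⟩ f hf heq
  have hfx : dist (f y') (u x') ≤ η := heq ▸ hf x' hx'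
  linarith [dist_triangle_left (u x') (u y') (f y'), hf y' hy']

theorem injOn_of_approximatesLinearOn_antilipschitz {𝕜 E F : Type*} [NontriviallyNormedField 𝕜]
    [NormedAddCommGroup E] [NormedSpace 𝕜 E] [NormedAddCommGroup F] [NormedSpace 𝕜 F] {f : E → F}
    {A : E →L[𝕜] F} {s : Set E} {c k : ℝ≥0} (hA : AntilipschitzWith k A)
    (hf : ApproximatesLinearOn f A s c) (hc : c < k⁻¹) : InjOn f s :=
  injOn_iff_injective.2
    ((hA.domRestrict s).add_sub_lipschitzWith (g := s.domRestrict f) hf.lipschitz_sub hc).injective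

/-- `f` is differentiable on `V` and `η`-close to `u` there in the `C¹` sense. The estimates are
non-strict because they come from averages. -/
structure IsC1CloseOn {E F : Type*} [NormedAddCommGroup E] [NormedSpace ℝ E]
    [NormedAddCommGroup F] [NormedSpace ℝ F] (f u : E → F) (V : Set E) (η : ℝ) : Prop where
  differentiableAt : ∀ x ∈ V, DifferentiableAt ℝ f x
  norm_sub_le : ∀ x ∈ V, ‖f x - u x‖ ≤ η
  norm_fderiv_sub_le : ∀ x ∈ V, ‖fderiv ℝ f x - fderiv ℝ u x‖ ≤ η

section Embedding

variable {E F : Type*} [NormedAddCommGroup E] [NormedSpace ℝ E]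
  [NormedAddCommGroup F] [NormedSpace ℝ F] {u : E → F} {K L V Ω : Set E}

theorem IsC1CloseOn.mono {f : E → F} {η η' : ℝ} (h : IsC1CloseOn f u V η) (hη : η ≤ η') :
    IsC1CloseOn f u V η' where
  differentiableAt := h.differentiableAt
  norm_sub_le x hx := (h.norm_sub_le x hx).trans hη
  norm_fderiv_sub_le x hx := (h.norm_fderiv_sub_le x hx).trans hη

theorem exists_isC1CloseOn_measureConv [ProperSpace E] [MeasurableSpace E] [BorelSpace E]
    [CompleteSpace F] (hΩ : IsOpen Ω) (hu : ContDiffOn ℝ 1 u Ω) (hL : IsCompact L) (hLΩ : L ⊆ Ω)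
    {η : ℝ} (hη : 0 < η) :
    ∃ δ > 0, (∀ x ∈ L, closedBall x δ ⊆ Ω) ∧ ∀ (μ : Measure E) [IsProbabilityMeasure μ],
      (∀ᵐ y ∂μ, y ∈ closedBall 0 δ) → IsC1CloseOn (measureConv u μ) u L η := by
  have hDu := hu.continuousOn_fderiv_of_isOpen hΩ le_rfl
  obtain ⟨δ₀, hδ₀, h₀⟩ := hL.exists_cthickening_subset_open hΩ hLΩ
  obtain ⟨δ₁, hδ₁, h₁⟩ := exists_forall_closedBall_dist_le hL
    (fun x hx => hu.continuousOn.continuousAt (hΩ.mem_nhds (hLΩ hx))) hη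
  obtain ⟨δ₂, hδ₂, h₂⟩ := exists_forall_closedBall_dist_le hL
    (fun x hx => hDu.continuousAt (hΩ.mem_nhds (hLΩ hx))) hη
  set δ := min δ₀ (min δ₁ δ₂)
  have hball : ∀ x ∈ L, closedBall x δ ⊆ Ω := fun x hx =>
    (closedBall_subset_closedBall (min_le_left ..)).trans
      ((closedBall_subset_cthickening hx δ₀).trans h₀)
  have hδ₁' : δ ≤ δ₁ := (min_le_right ..).trans (min_le_left ..)
  have hδ₂' : δ ≤ δ₂ := (min_le_right ..).trans (min_le_right ..)
  refine ⟨δ, by positivity, hball, fun μ _ hμ => ⟨fun x hx => ?_, fun x hx => ?_, fun x hx => ?_⟩⟩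
  · exact (hasFDerivAt_measureConv hΩ hu hμ (hball x hx)).differentiableAt
  · exact norm_measureConv_sub_le hμ
      (integrable_comp_sub_of_continuousOn_closedBall hμ (hu.continuousOn.mono (hball x hx)))
      fun z hz => by
        simpa [dist_eq_norm] using h₁ x hx z (closedBall_subset_closedBall hδ₁' hz)
  · rw [(hasFDerivAt_measureConv hΩ hu hμ (hball x hx)).fderiv]
    exact norm_measureConv_sub_le hμ
      (integrable_comp_sub_of_continuousOn_closedBall hμ (hDu.mono (hball x hx)))
      fun z hz => by
        simpa [dist_eq_norm] using h₂ x hx z (closedBall_subset_closedBall hδ₂' hz)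

theorem exists_ball_embedding_of_isC1CloseOn [FiniteDimensional ℝ E] {x₀ : E}
    (hu : ContinuousAt (fderiv ℝ u) x₀) (himm : Injective (fderiv ℝ u x₀)) (hV : V ∈ 𝓝 x₀) :
    ∃ r > 0, ∀ f, IsC1CloseOn f u V r →
      InjOn f (ball x₀ r) ∧ ∀ x ∈ ball x₀ r, Injective (fderiv ℝ f x) := by
  set A := fderiv ℝ u x₀
  obtain ⟨k, hk, hA⟩ := A.injective_iff_antilipschitz.1 himm
  obtain ⟨c, hc, hck⟩ := exists_between (inv_pos.2 hk)
  obtain ⟨r₀, hr₀, hball⟩ := Metric.mem_nhds_iff.1 (inter_mem hV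
    (hu.preimage_mem_nhds (closedBall_mem_nhds A (half_pos (NNReal.coe_pos.2 hc)))))
  refine ⟨min r₀ (c / 2), by positivity, fun f hf => ?_⟩
  have hsub : ball x₀ (min r₀ (c / 2)) ⊆ ball x₀ r₀ := ball_subset_ball (min_le_left ..)
  have hnear : ∀ x ∈ ball x₀ (min r₀ (c / 2)), ‖fderiv ℝ f x - A‖ ≤ c := fun x hx =>
    calc ‖fderiv ℝ f x - A‖ ≤ ‖fderiv ℝ f x - fderiv ℝ u x‖ + ‖fderiv ℝ u x - A‖ :=
          norm_sub_le_norm_sub_add_norm_sub ..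
      _ ≤ c / 2 + c / 2 := add_le_add
          ((hf.norm_fderiv_sub_le x (hball (hsub hx)).1).trans (min_le_right ..))
          (mem_closedBall_iff_norm.1 (hball (hsub hx)).2)
      _ = c := add_halves _
  refine ⟨injOn_of_approximatesLinearOn_antilipschitz hA (fun x hx y hy => ?_) hck,
    fun x hx => injOn_univ.1 <| injOn_of_approximatesLinearOn_antilipschitz hA
      (fun y _ z _ => ?_) hck⟩
  · exact (convex_ball x₀ _).norm_image_sub_le_of_norm_fderiv_le'
      (fun z hz => hf.differentiableAt z (hball (hsub hz)).1) hnear hy hx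
  · rw [← map_sub]
    exact (fderiv ℝ f x - A).le_of_opNorm_le (hnear x hx) (y - z)

theorem exists_embedding_of_isC1CloseOn [FiniteDimensional ℝ E] (hK : IsCompact K)
    (hu : ∀ x ∈ K, ContDiffAt ℝ 1 u x) (hinj : InjOn u K)
    (himm : ∀ x ∈ K, Injective (fderiv ℝ u x)) (hV : V ∈ 𝓝ˢ K) :
    ∃ η > 0, ∀ f, IsC1CloseOn f u V η → InjOn f K ∧ ∀ x ∈ K, Injective (fderiv ℝ f x) := by
  have hVx := mem_nhdsSet_iff_forall.1 hV
  -- The pairs `(x, x)` carry the injectivity of the derivative, so one compactness argument on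
  -- `K × K` gives both conclusions.
  have hpairs : ∀ᶠ η in 𝓝 (0 : ℝ), ∀ p ∈ K ×ˢ K, ∀ f, IsC1CloseOn f u V η →
      f p.1 = f p.2 → p.1 = p.2 ∧ Injective (fderiv ℝ f p.1) := by
    refine (hK.prod hK).eventually_forall_of_forall_eventually ?_
    rintro ⟨x, y⟩ ⟨hx, hy⟩
    rcases eq_or_ne x y with rfl | hxy
    · obtain ⟨r, hr, h⟩ := exists_ball_embedding_of_isC1CloseOn
        ((hu x hx).continuousAt_fderiv one_ne_zero) (himm x hx) (hVx x hx)
      filter_upwards [prod_mem_nhds (Iic_mem_nhds hr)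
        (prod_mem_nhds (ball_mem_nhds x hr) (ball_mem_nhds x hr))]
        with ⟨η, x', y'⟩ ⟨hη, hx', hy'⟩ f hf heq
      obtain ⟨hf_inj, hf_imm⟩ := h f (hf.mono hη)
      exact ⟨hf_inj hx' hy' heq, hf_imm x' hx'⟩
    · filter_upwards [eventually_ne_of_dist_le (hu x hx).continuousAt (hu y hy).continuousAt
        (hinj.ne hx hy hxy) (hVx x hx) (hVx y hy)] with p hp f hf heq
      exact absurd heq (hp f (by simpa [dist_eq_norm] using hf.norm_sub_le))
  obtain ⟨η, h, hη⟩ := ((hpairs.filter_mono nhdsWithin_le_nhds).and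
    (self_mem_nhdsWithin (s := Ioi 0))).exists
  exact ⟨η, hη, fun f hf => ⟨fun x hx y hy heq => (h (x, y) ⟨hx, hy⟩ f hf heq).1,
    fun x hx => (h (x, x) ⟨hx, hx⟩ f hf rfl).2⟩⟩

theorem mollified_map_is_embedding_general [FiniteDimensional ℝ E] [MeasurableSpace E]
    [BorelSpace E] [CompleteSpace F] (hΩ : IsOpen Ω) (hK : IsCompact K) (hKΩ : K ⊆ Ω)
    (hu : ContDiffOn ℝ 1 u Ω) (hinj : InjOn u K) (himm : ∀ x ∈ K, Injective (fderiv ℝ u x)) :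
    ∃ δ > 0, (∀ x ∈ K, closedBall x δ ⊆ Ω) ∧ ∀ (μ : Measure E) [IsProbabilityMeasure μ],
      (∀ᵐ y ∂μ, y ∈ closedBall 0 δ) →
        InjOn (measureConv u μ) K ∧ ∀ x ∈ K, Injective (fderiv ℝ (measureConv u μ) x) := by
  have : ProperSpace E := FiniteDimensional.proper_real E
  obtain ⟨L, hL, hKL, hLΩ⟩ := exists_compact_between hK hΩ hKΩ
  obtain ⟨η, hη, hstable⟩ := exists_embedding_of_isC1CloseOn hK
    (fun x hx => hu.contDiffAt (hΩ.mem_nhds (hKΩ hx))) hinj himm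
    (subset_interior_iff_mem_nhdsSet.1 hKL)
  obtain ⟨δ, hδ, hball, hclose⟩ := exists_isC1CloseOn_measureConv hΩ hu hL hLΩ hη
  exact ⟨δ, hδ, fun x hx => hball x (interior_subset (hKL hx)),
    fun μ _ hμ => hstable _ (hclose μ hμ)⟩

end Embedding

theorem isProbabilityMeasure_withDensity_ofReal_s4 {α : Type*} [MeasurableSpace α] {μ : Measure α}
    {f : α → ℝ} (hf : 0 ≤ᵐ[μ] f) (hint : ∫ x, f x ∂μ = 1) :
    IsProbabilityMeasure (μ.withDensity fun x => ENNReal.ofReal (f x)) where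
  measure_univ := by
    rw [withDensity_apply _ .univ, setLIntegral_univ, ← ofReal_integral_eq_lintegral_ofReal
      (.of_integral_ne_zero (by simp [hint])) hf, hint, ENNReal.ofReal_one]

/-- The measure `φ_ε(y) dy`, encoded as the image of `φ(y) dy` under the dilation by `ε`. -/
noncomputable def mollifierMeasure {E : Type*} [NormedAddCommGroup E] [NormedSpace ℝ E]
    [MeasureSpace E] (φ : E → ℝ) (ε : ℝ) : Measure E :=
  (volume.withDensity fun y => ENNReal.ofReal (φ y)).map (ε • ·)

section MollifierMeasure

variable {E : Type*} [NormedAddCommGroup E] [NormedSpace ℝ E] [MeasureSpace E] [BorelSpace E]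
  {φ : E → ℝ} {ε : ℝ}

theorem isProbabilityMeasure_mollifierMeasure (hφ : ∀ x, 0 ≤ φ x) (hint : ∫ x, φ x = 1) :
    IsProbabilityMeasure (mollifierMeasure φ ε) :=
  have := isProbabilityMeasure_withDensity_ofReal_s4 (.of_forall hφ) hint
  Measure.isProbabilityMeasure_map (measurable_const_smul ε).aemeasurable

theorem ae_mollifierMeasure_mem_closedBall (hφ : AEMeasurable φ)
    (hsupp : support φ ⊆ closedBall 0 1) (hε : 0 ≤ ε) :
    ∀ᵐ y ∂mollifierMeasure φ ε, y ∈ closedBall 0 ε := by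
  rw [mollifierMeasure, ae_map_iff (p := (· ∈ closedBall 0 ε))
    (measurable_const_smul ε).aemeasurable isClosed_closedBall.measurableSet,
    ae_withDensity_iff' hφ.ennreal_ofReal]
  refine .of_forall fun y hy => ?_
  have hy_norm : ‖y‖ ≤ 1 := by
    simpa using hsupp fun h0 : φ y = 0 => hy (by simp [h0])
  simpa [norm_smul, abs_of_nonneg hε] using mul_le_of_le_one_right hε hy_norm

end MollifierMeasure

theorem mollifyV_eq_measureConv {n q : ℕ} {φ : EuclideanSpace ℝ (Fin n) → ℝ} {ε : ℝ}
    (hφ : AEMeasurable φ) (hφ_nonneg : ∀ x, 0 ≤ φ x) (hε : 0 < ε)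
    (u : EuclideanSpace ℝ (Fin n) → EuclideanSpace ℝ (Fin q)) :
    mollifyV n q φ ε u = measureConv u (mollifierMeasure φ ε) := by
  funext x
  calc mollifyV n q φ ε u x
      = (ε ^ n)⁻¹ • ∫ y, (fun z => φ z • u (x - ε • z)) (ε⁻¹ • y) := by
        rw [← integral_smul]
        simp [mollifyV, mul_smul, smul_inv_smul₀ hε.ne']
    _ = ∫ z, φ z • u (x - ε • z) := by
        rw [Measure.integral_comp_inv_smul_of_nonneg volume
          (fun z => φ z • u (x - ε • z)) hε.le, finrank_euclideanSpace_fin,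
          inv_smul_smul₀ (by positivity)]
    _ = ∫ z, u (x - ε • z) ∂volume.withDensity fun z => ENNReal.ofReal (φ z) := by
        rw [integral_withDensity_eq_integral_toReal_smul₀ hφ.ennreal_ofReal (by simp)]
        simp [ENNReal.toReal_ofReal (hφ_nonneg _)]
    _ = measureConv u (mollifierMeasure φ ε) x :=
        ((measurableEmbedding_const_smul₀ hε.ne').integral_map fun y => u (x - y)).symm

/-- let `u ∈ C¹(Ω, ℝ^q)` be injective with injective differential everywhere
on the open set `Ω`, and let `K ⊂ Ω` be compact.  Then there is `ε* > 0`, smaller than the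
distance from `K` to the complement of `Ω` (expressed by: the closed `ε*`-balls around
points of `K` lie in `Ω`), such that for `0 < ε < ε*` the mollification `u*φ_ε` is
injective on `K` with injective differential at every point of `K`; i.e. it is again an
embedding of `K`. -/
theorem mollified_map_is_embedding
    (n q : ℕ) (hn : 1 ≤ n) (hq : 1 ≤ q)
    (φ : EuclideanSpace ℝ (Fin n) → ℝ)
    (hφ_smooth : ContDiff ℝ (⊤ : ℕ∞) φ)
    (hφ_supp : Function.support φ ⊆ Metric.closedBall 0 1)
    (hφ_nonneg : ∀ x, 0 ≤ φ x)
    (hφ_int : ∫ x, φ x = 1)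
    (Ω K : Set (EuclideanSpace ℝ (Fin n)))
    (u : EuclideanSpace ℝ (Fin n) → EuclideanSpace ℝ (Fin q))
    (hΩ : IsOpen Ω) (hK : IsCompact K) (hKΩ : K ⊆ Ω)
    (hu : ContDiffOn ℝ 1 u Ω)
    (huinj : Set.InjOn u Ω)
    (huimm : ∀ x ∈ Ω, Function.Injective (fderiv ℝ u x)) :
    ∃ εstar : ℝ, 0 < εstar ∧ (∀ x ∈ K, Metric.closedBall x εstar ⊆ Ω) ∧
      ∀ ε : ℝ, 0 < ε → ε < εstar →
        Set.InjOn (mollifyV n q φ ε u) K ∧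
        ∀ x ∈ K, Function.Injective (fderiv ℝ (mollifyV n q φ ε u) x) := by
  obtain ⟨δ, hδ, hball, hembed⟩ := mollified_map_is_embedding_general hΩ hK hKΩ hu
    (huinj.mono hKΩ) fun x hx => huimm x (hKΩ hx)
  refine ⟨δ, hδ, hball, fun ε hε hεδ => ?_⟩
  have hφ := hφ_smooth.continuous.aemeasurable (μ := volume)
  have := isProbabilityMeasure_mollifierMeasure (ε := ε) hφ_nonneg hφ_int
  rw [mollifyV_eq_measureConv hφ hφ_nonneg hε]
  exact hembed _ ((ae_mollifierMeasure_mem_closedBall hφ hφ_supp hε.le).mono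
    (closedBall_subset_closedBall hεδ.le))
end

section
/- Let Ω ⊆ ℝ^n be open and let u ∈ C^∞(Ω, ℝ^q) be an immersion with pullback metric g = (Du)ᵀDu and tangential projection P(x) = Du(x) g(x)^{−1} Du(x)ᵀ. For f ∈ C^∞(ℝ^q) and a ∈ {1,…,q} define φ_a : Ω → ℝ by φ_a(x) = (P(x)e_a) · ∇f(u(x)) and v_a : Ω → ℝ^n by v_a(x) = g(x)^{−1} Du(x)ᵀ e_a (so that Du(x)v_a(x) = P(x)e_a). Then for every x ∈ Ω, Σ_{a=1}^q Σ_{i=1}^n v_a^i(x) ∂_i φ_a(x) = Δ_g(f∘u)(x); that is, the sum over a of the second derivatives of f along the tangential projections of the coordinate directions equals the Laplace–Beltrami operator of the induced metric applied to f∘u. -/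
open Matrix Function

/-- The differential of `u : ℝ^n → ℝ^q` at `x`, written as the `q × n` Jacobian matrix
`(Du)_{a i} = ∂_i u^a`. -/
noncomputable def Dmat (n q : ℕ)
    (u : EuclideanSpace ℝ (Fin n) → EuclideanSpace ℝ (Fin q))
    (x : EuclideanSpace ℝ (Fin n)) : Matrix (Fin q) (Fin n) ℝ :=
  Matrix.of fun a i => fderiv ℝ u x (EuclideanSpace.single i 1) a

/-- The pullback metric `g = (Du)ᵀ Du`, with entries `g_{ij} = Σ_a ∂_i u^a ∂_j u^a`. -/
noncomputable def pullbackG (n q : ℕ)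
    (u : EuclideanSpace ℝ (Fin n) → EuclideanSpace ℝ (Fin q))
    (x : EuclideanSpace ℝ (Fin n)) : Matrix (Fin n) (Fin n) ℝ :=
  (Dmat n q u x)ᵀ * Dmat n q u x

/-- The tangential projection `P(x) = Du(x) g(x)⁻¹ Du(x)ᵀ`, the orthogonal projection of
`ℝ^q` onto the tangent space `Du(x)(ℝ^n)`. -/
noncomputable def tangP (n q : ℕ)
    (u : EuclideanSpace ℝ (Fin n) → EuclideanSpace ℝ (Fin q))
    (x : EuclideanSpace ℝ (Fin n)) : Matrix (Fin q) (Fin q) ℝ :=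
  Dmat n q u x * (pullbackG n q u x)⁻¹ * (Dmat n q u x)ᵀ

/-- The Laplace–Beltrami operator of a matrix field `g` (a Riemannian metric in
coordinates) acting on a function `F`:
`Δ_g F = |g|^{-1/2} Σ_{i,j} ∂_i (|g|^{1/2} g^{ij} ∂_j F)`. -/
noncomputable def laplaceBeltrami (n : ℕ)
    (g : EuclideanSpace ℝ (Fin n) → Matrix (Fin n) (Fin n) ℝ)
    (F : EuclideanSpace ℝ (Fin n) → ℝ) (x : EuclideanSpace ℝ (Fin n)) : ℝ :=
  (Real.sqrt (g x).det)⁻¹ *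
    ∑ i : Fin n,
      fderiv ℝ (fun y => Real.sqrt (g y).det *
          ∑ j : Fin n, (g y)⁻¹ i j * fderiv ℝ F y (EuclideanSpace.single j 1)) x
        (EuclideanSpace.single i 1)

/-!
Let `Y` be a vector field on `Ω` with values in `ℝ^q`, and let `v_a` be the columns of the left
inverse `g⁻¹ Duᵀ` of `Du`. If `Y = Du X` is tangent to the immersion, then `Σ_a v_a(Y^a)` is the
intrinsic divergence of `X`: the terms differentiating `X` give `Σ_i ∂_i X^i` because
`g⁻¹ Duᵀ Du = 1`, and the terms differentiating `Du` give
`Σ_k X^k tr(g⁻¹ Duᵀ ∂_k Du) = Σ_k X^k ∂_k log √|g|` by symmetry of the second derivatives and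
Jacobi's formula. The theorem is the case `X = grad_g (f ∘ u)`, for which `Du X = P ∇f` by the chain
rule.
-/

section MatrixCalculus

variable {𝕜 E : Type*} [NontriviallyNormedField 𝕜] [NormedAddCommGroup E] [NormedSpace 𝕜 E]
  {l m n : Type*} {x : E}

variable (𝕜) in
/-- The derivative of a matrix field `A` at `x` in the direction `v`. It is taken entry by entry
because `Matrix` carries no canonical norm. -/
noncomputable def entrywiseDeriv (A : E → Matrix m n 𝕜) (x v : E) : Matrix m n 𝕜 :=
  Matrix.of fun i j => fderiv 𝕜 (fun y => A y i j) x v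

theorem entrywiseDeriv_mul [Fintype m] {A : E → Matrix l m 𝕜} {B : E → Matrix m n 𝕜}
    (hA : ∀ i j, DifferentiableAt 𝕜 (fun y => A y i j) x)
    (hB : ∀ i j, DifferentiableAt 𝕜 (fun y => B y i j) x) (v : E) :
    entrywiseDeriv 𝕜 (fun y => A y * B y) x v =
      entrywiseDeriv 𝕜 A x v * B x + A x * entrywiseDeriv 𝕜 B x v := by
  ext i k
  simp only [entrywiseDeriv, Matrix.of_apply, Matrix.add_apply, Matrix.mul_apply]
  rw [fderiv_fun_sum fun j _ => (hA i j).fun_mul (hB j k)]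
  simp [fderiv_fun_mul (hA i _) (hB _ k), Finset.sum_add_distrib, mul_comm, add_comm]

theorem fderiv_mulVec_apply [Fintype n] {A : E → Matrix m n 𝕜} {X : E → n → 𝕜}
    (hA : ∀ i j, DifferentiableAt 𝕜 (fun y => A y i j) x) (hX : DifferentiableAt 𝕜 X x)
    (v : E) (i : m) :
    fderiv 𝕜 (fun y => (A y *ᵥ X y) i) x v =
      (entrywiseDeriv 𝕜 A x v *ᵥ X x) i + (A x *ᵥ fderiv 𝕜 X x v) i := by
  have hXj : ∀ j, DifferentiableAt 𝕜 (fun y => X y j) x := differentiableAt_pi.1 hX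
  simp only [entrywiseDeriv, Matrix.mulVec, dotProduct, Matrix.of_apply]
  rw [fderiv_fun_sum fun j _ => (hA i j).fun_mul (hXj j)]
  simp [fderiv_fun_mul (hA i _) (hXj _), fderiv_apply hX, Finset.sum_add_distrib, mul_comm,
    add_comm]

section Square

variable [Fintype n] [DecidableEq n] {A : E → Matrix n n 𝕜}

theorem differentiableAt_matrix_det (hA : ∀ i j, DifferentiableAt 𝕜 (fun y => A y i j) x) :
    DifferentiableAt 𝕜 (fun y => (A y).det) x := by
  simp only [Matrix.det_apply]
  fun_prop

theorem differentiableAt_matrix_inv_apply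
    (hA : ∀ i j, DifferentiableAt 𝕜 (fun y => A y i j) x) (hdet : (A x).det ≠ 0) (i j : n) :
    DifferentiableAt 𝕜 (fun y => (A y)⁻¹ i j) x := by
  simp only [Matrix.inv_def, Ring.inverse_eq_inv', Matrix.smul_apply, smul_eq_mul,
    Matrix.adjugate_apply]
  refine ((differentiableAt_matrix_det hA).inv hdet).mul (differentiableAt_matrix_det fun k l => ?_)
  obtain rfl | hkj := eq_or_ne k j
  · simp
  · simpa [Matrix.updateRow_ne hkj] using hA k l

theorem sum_det_updateRow_eq_trace_adjugate_mul {R : Type*} [CommRing R] (M N : Matrix n n R) :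
    ∑ i, (M.updateRow i (N i)).det = (M.adjugate * N).trace := by
  rw [Matrix.trace_mul_comm]
  refine Finset.sum_congr rfl fun i _ => ?_
  rw [← Matrix.cramer_transpose_apply, Matrix.cramer_eq_adjugate_mulVec,
    ← Matrix.adjugate_transpose, Matrix.mulVec_transpose]
  rfl

/-- **Jacobi's formula**. -/
theorem fderiv_matrix_det_apply (hA : ∀ i j, DifferentiableAt 𝕜 (fun y => A y i j) x) (v : E) :
    fderiv 𝕜 (fun y => (A y).det) x v = ((A x).adjugate * entrywiseDeriv 𝕜 A x v).trace := by
  let detRows : ContinuousMultilinearMap 𝕜 (fun _ : n => n → 𝕜) 𝕜 :=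
    { (Matrix.detRowAlternating (R := 𝕜) (n := n)).toMultilinearMap with
      cont := Continuous.matrix_det (A := fun M : n → n → 𝕜 => Matrix.of M) continuous_id }
  have hrow (i : n) : HasFDerivAt (fun y => A y i)
      (ContinuousLinearMap.pi fun j => fderiv 𝕜 (fun y => A y i j) x) x :=
    hasFDerivAt_pi.2 fun j => (hA i j).hasFDerivAt
  have hdet := HasFDerivAt.multilinear_comp detRows hrow
  calc fderiv 𝕜 (fun y => (A y).det) x v
      = ∑ i, ((A x).updateRow i (entrywiseDeriv 𝕜 A x v i)).det := by
        change fderiv 𝕜 (fun y => detRows fun i => A y i) x v = _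
        rw [hdet.fderiv]
        simp only [FunLike.coe_sum, Finset.sum_apply]
        rfl
    _ = ((A x).adjugate * entrywiseDeriv 𝕜 A x v).trace :=
        sum_det_updateRow_eq_trace_adjugate_mul _ _

end Square

end MatrixCalculus

theorem fderiv_sqrt_det_apply {E n : Type*} [NormedAddCommGroup E] [NormedSpace ℝ E] [Fintype n]
    [DecidableEq n] {A : E → Matrix n n ℝ} {x : E}
    (hA : ∀ i j, DifferentiableAt ℝ (fun y => A y i j) x) (hdet : 0 < (A x).det) (v : E) :
    fderiv ℝ (fun y => √(A y).det) x v =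
      √(A x).det * (2⁻¹ * ((A x)⁻¹ * entrywiseDeriv ℝ A x v).trace) := by
  have hadj : (A x).adjugate = (A x).det • (A x)⁻¹ := by
    rw [Matrix.inv_def, Ring.inverse_eq_inv', smul_inv_smul₀ hdet.ne']
  rw [fderiv_sqrt (differentiableAt_matrix_det hA) hdet.ne', _root_.smul_apply,
    fderiv_matrix_det_apply hA, hadj, Matrix.smul_mul, Matrix.trace_smul, smul_eq_mul, smul_eq_mul]
  have hsqrt : √(A x).det ≠ 0 := (Real.sqrt_pos.2 hdet).ne'
  field_simp
  rw [Real.sq_sqrt hdet.le]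

theorem trace_mul_transpose_mul_add {R m n : Type*} [CommSemiring R] [Fintype m] [Fintype n]
    {S : Matrix n n R} (hS : S.IsSymm) (A B : Matrix m n R) :
    (S * (Bᵀ * A + Aᵀ * B)).trace = 2 * (S * Aᵀ * B).trace := by
  have hswap : (S * (Bᵀ * A)).trace = (S * Aᵀ * B).trace := by
    rw [← Matrix.trace_transpose]
    simp only [Matrix.transpose_mul, Matrix.transpose_transpose, hS.eq]
    rw [Matrix.trace_mul_comm, Matrix.mul_assoc]
  rw [Matrix.mul_add, Matrix.trace_add, hswap, ← Matrix.mul_assoc, two_mul]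

theorem differentiableAt_fderiv_of_contDiffAt_two {𝕜 E F : Type*} [NontriviallyNormedField 𝕜]
    [NormedAddCommGroup E] [NormedSpace 𝕜 E] [NormedAddCommGroup F] [NormedSpace 𝕜 F] {f : E → F}
    {x : E} (hf : ContDiffAt 𝕜 2 f x) : DifferentiableAt 𝕜 (fderiv 𝕜 f) x :=
  (hf.fderiv_right (m := 1) le_rfl).differentiableAt one_ne_zero

section Riemannian

variable {n : ℕ} {g : EuclideanSpace ℝ (Fin n) → Matrix (Fin n) (Fin n) ℝ}
  {x : EuclideanSpace ℝ (Fin n)}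

/-- The vector `(∂_1 F, …, ∂_n F)` of partial derivatives, i.e. the components of `dF`. -/
noncomputable def partialDerivs (F : EuclideanSpace ℝ (Fin n) → ℝ)
    (x : EuclideanSpace ℝ (Fin n)) : Fin n → ℝ :=
  fun i => fderiv ℝ F x (EuclideanSpace.single i 1)

/-- The Riemannian gradient `(grad_g F)^i = Σ_j g^{ij} ∂_j F` in coordinates. -/
noncomputable def riemannianGrad (g : EuclideanSpace ℝ (Fin n) → Matrix (Fin n) (Fin n) ℝ)
    (F : EuclideanSpace ℝ (Fin n) → ℝ) (x : EuclideanSpace ℝ (Fin n)) : Fin n → ℝ :=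
  (g x)⁻¹ *ᵥ partialDerivs F x

/-- The Riemannian divergence `div_g X = |g|^{-1/2} Σ_i ∂_i (|g|^{1/2} X^i)` in coordinates. -/
noncomputable def riemannianDiv (g : EuclideanSpace ℝ (Fin n) → Matrix (Fin n) (Fin n) ℝ)
    (X : EuclideanSpace ℝ (Fin n) → Fin n → ℝ) (x : EuclideanSpace ℝ (Fin n)) : ℝ :=
  (√(g x).det)⁻¹ * ∑ i, partialDerivs (fun y => √(g y).det * X y i) x i

theorem laplaceBeltrami_eq_riemannianDiv_riemannianGrad (F : EuclideanSpace ℝ (Fin n) → ℝ) :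
    laplaceBeltrami n g F x = riemannianDiv g (riemannianGrad g F) x :=
  rfl

theorem differentiableAt_riemannianGrad {F : EuclideanSpace ℝ (Fin n) → ℝ}
    (hg : ∀ i j, DifferentiableAt ℝ (fun y => g y i j) x) (hdet : (g x).det ≠ 0)
    (hF : DifferentiableAt ℝ (fderiv ℝ F) x) : DifferentiableAt ℝ (riemannianGrad g F) x := by
  refine differentiableAt_pi.2 fun i => ?_
  simp only [riemannianGrad, partialDerivs, Matrix.mulVec, dotProduct]
  exact DifferentiableAt.fun_sum fun j _ => (differentiableAt_matrix_inv_apply hg hdet i j).fun_mul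
    (hF.clm_apply (differentiableAt_const _))

theorem riemannianDiv_eq_sum_add_sum_trace {X : EuclideanSpace ℝ (Fin n) → Fin n → ℝ}
    (hg : ∀ i j, DifferentiableAt ℝ (fun y => g y i j) x) (hdet : 0 < (g x).det)
    (hX : DifferentiableAt ℝ X x) :
    riemannianDiv g X x = ∑ i, fderiv ℝ X x (EuclideanSpace.single i 1) i +
      ∑ k, X x k *
        (2⁻¹ * ((g x)⁻¹ * entrywiseDeriv ℝ g x (EuclideanSpace.single k 1)).trace) := by
  have hsqrt : √(g x).det ≠ 0 := (Real.sqrt_pos.2 hdet).ne'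
  have hdens : DifferentiableAt ℝ (fun y => √(g y).det) x :=
    (differentiableAt_matrix_det hg).sqrt hdet.ne'
  rw [riemannianDiv, Finset.mul_sum, ← Finset.sum_add_distrib]
  refine Finset.sum_congr rfl fun i _ => ?_
  rw [partialDerivs, fderiv_fun_mul hdens (differentiableAt_pi.1 hX i), _root_.add_apply,
    _root_.smul_apply, _root_.smul_apply, fderiv_sqrt_det_apply hg hdet, fderiv_apply hX,
    smul_eq_mul, smul_eq_mul]
  simp only [ContinuousLinearMap.comp_apply, ContinuousLinearMap.proj_apply]
  field_simp

end Riemannian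

section Immersion

variable {n q : ℕ} {u : EuclideanSpace ℝ (Fin n) → EuclideanSpace ℝ (Fin q)}
  {x : EuclideanSpace ℝ (Fin n)}

theorem Dmat_mulVec (v : EuclideanSpace ℝ (Fin n)) :
    Dmat n q u x *ᵥ v.ofLp = (fderiv ℝ u x v).ofLp := by
  ext a
  conv_rhs => rw [← (EuclideanSpace.basisFun (Fin n) ℝ).sum_repr v]
  simp [Dmat, Matrix.mulVec, dotProduct, mul_comm]

theorem pullbackG_posDef (himm : Injective (fderiv ℝ u x)) : (pullbackG n q u x).PosDef := by
  have hinj : Injective (Dmat n q u x).mulVec := by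
    have hcomp : (Dmat n q u x).mulVec = WithLp.ofLp ∘ fderiv ℝ u x ∘ WithLp.toLp 2 :=
      funext fun v => Dmat_mulVec (WithLp.toLp 2 v)
    rw [hcomp]
    exact (WithLp.ofLp_injective 2).comp (himm.comp (WithLp.toLp_injective 2))
  exact Matrix.PosDef.conjTranspose_mul_self _ hinj

theorem pullbackG_inv_isSymm : (pullbackG n q u x)⁻¹.IsSymm := by
  rw [Matrix.IsSymm, Matrix.transpose_nonsing_inv, pullbackG, Matrix.transpose_mul,
    Matrix.transpose_transpose]

theorem tangP_isSymm : (tangP n q u x).IsSymm := by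
  rw [Matrix.IsSymm, tangP, Matrix.transpose_mul, Matrix.transpose_mul, Matrix.transpose_transpose,
    pullbackG_inv_isSymm.eq, Matrix.mul_assoc]

theorem partialDerivs_comp {f : EuclideanSpace ℝ (Fin q) → ℝ}
    (hf : DifferentiableAt ℝ f (u x)) (hu : DifferentiableAt ℝ u x) :
    partialDerivs (f ∘ u) x = (Dmat n q u x)ᵀ *ᵥ partialDerivs f (u x) := by
  ext j
  rw [partialDerivs, fderiv_comp x hf hu, ContinuousLinearMap.comp_apply,
    ← (EuclideanSpace.basisFun (Fin q) ℝ).sum_repr (fderiv ℝ u x (EuclideanSpace.single j 1))]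
  simp [Dmat, partialDerivs, Matrix.mulVec, dotProduct]

theorem tangP_mulVec_partialDerivs {f : EuclideanSpace ℝ (Fin q) → ℝ}
    (hf : DifferentiableAt ℝ f (u x)) (hu : DifferentiableAt ℝ u x) :
    tangP n q u x *ᵥ partialDerivs f (u x) =
      Dmat n q u x *ᵥ riemannianGrad (pullbackG n q u) (f ∘ u) x := by
  simp only [tangP, riemannianGrad, partialDerivs_comp hf hu, Matrix.mulVec_mulVec,
    Matrix.mul_assoc]

theorem differentiableAt_Dmat_apply (hu : DifferentiableAt ℝ (fderiv ℝ u) x) (a : Fin q)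
    (i : Fin n) : DifferentiableAt ℝ (fun y => Dmat n q u y a i) x :=
  differentiableAt_piLp 2 |>.1 (hu.clm_apply (differentiableAt_const _)) a

theorem entrywiseDeriv_Dmat_apply (hu : DifferentiableAt ℝ (fderiv ℝ u) x)
    (v : EuclideanSpace ℝ (Fin n)) (a : Fin q) (i : Fin n) :
    entrywiseDeriv ℝ (Dmat n q u) x v a i =
      fderiv ℝ (fderiv ℝ u) x v (EuclideanSpace.single i 1) a := by
  have hpartial := hu.hasFDerivAt.clm_apply (hasFDerivAt_const (EuclideanSpace.single i (1 : ℝ)) x)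
  have hentry := (EuclideanSpace.proj (𝕜 := ℝ) a).hasFDerivAt.comp x hpartial
  exact congr($hentry.fderiv v).trans (by simp)

theorem entrywiseDeriv_Dmat_single_comm (hu : ContDiffAt ℝ 2 u x) (a : Fin q) (i k : Fin n) :
    entrywiseDeriv ℝ (Dmat n q u) x (EuclideanSpace.single i 1) a k =
      entrywiseDeriv ℝ (Dmat n q u) x (EuclideanSpace.single k 1) a i := by
  have hDu := differentiableAt_fderiv_of_contDiffAt_two hu
  rw [entrywiseDeriv_Dmat_apply hDu, entrywiseDeriv_Dmat_apply hDu,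
    (hu.isSymmSndFDerivAt (by simp)).eq]

theorem differentiableAt_pullbackG_apply (hu : DifferentiableAt ℝ (fderiv ℝ u) x) (i j : Fin n) :
    DifferentiableAt ℝ (fun y => pullbackG n q u y i j) x := by
  simp only [pullbackG, Matrix.mul_apply, Matrix.transpose_apply]
  exact DifferentiableAt.fun_sum fun a _ =>
    (differentiableAt_Dmat_apply hu a i).fun_mul (differentiableAt_Dmat_apply hu a j)

theorem entrywiseDeriv_pullbackG (hu : DifferentiableAt ℝ (fderiv ℝ u) x)
    (v : EuclideanSpace ℝ (Fin n)) :
    entrywiseDeriv ℝ (pullbackG n q u) x v =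
      (entrywiseDeriv ℝ (Dmat n q u) x v)ᵀ * Dmat n q u x +
        (Dmat n q u x)ᵀ * entrywiseDeriv ℝ (Dmat n q u) x v :=
  entrywiseDeriv_mul (A := fun y => (Dmat n q u y)ᵀ)
    (fun i a => differentiableAt_Dmat_apply hu a i) (differentiableAt_Dmat_apply hu) v

/-- The Moore–Penrose left inverse `g⁻¹ Duᵀ` of the differential of an immersion. Its `a`-th column
is the coordinate vector `v_a` of the tangential projection of `e_a`. -/
noncomputable def dmatLeftInv (u : EuclideanSpace ℝ (Fin n) → EuclideanSpace ℝ (Fin q))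
    (x : EuclideanSpace ℝ (Fin n)) : Matrix (Fin n) (Fin q) ℝ :=
  (pullbackG n q u x)⁻¹ * (Dmat n q u x)ᵀ

theorem dmatLeftInv_mul_Dmat (himm : Injective (fderiv ℝ u x)) :
    dmatLeftInv u x * Dmat n q u x = 1 := by
  rw [dmatLeftInv, Matrix.mul_assoc]
  exact Matrix.nonsing_inv_mul _ (pullbackG_posDef himm).det_pos.ne'.isUnit

theorem half_trace_inv_mul_entrywiseDeriv_pullbackG (hu : DifferentiableAt ℝ (fderiv ℝ u) x)
    (v : EuclideanSpace ℝ (Fin n)) :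
    2⁻¹ * ((pullbackG n q u x)⁻¹ * entrywiseDeriv ℝ (pullbackG n q u) x v).trace =
      (dmatLeftInv u x * entrywiseDeriv ℝ (Dmat n q u) x v).trace := by
  rw [entrywiseDeriv_pullbackG hu, trace_mul_transpose_mul_add pullbackG_inv_isSymm,
    inv_mul_cancel_left₀ two_ne_zero, dmatLeftInv]

/-- The tangential divergence `Σ_a v_a(Y^a)` of an `ℝ^q`-valued field `Y` along the immersion `u`:
the trace over the tangent space of the derivative of `Y`. -/
noncomputable def tangentialDiv (u : EuclideanSpace ℝ (Fin n) → EuclideanSpace ℝ (Fin q))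
    (Y : EuclideanSpace ℝ (Fin n) → Fin q → ℝ) (x : EuclideanSpace ℝ (Fin n)) : ℝ :=
  ∑ a, ∑ i, dmatLeftInv u x i a * partialDerivs (fun y => Y y a) x i

theorem tangentialDiv_congr {Y Z : EuclideanSpace ℝ (Fin n) → Fin q → ℝ} (h : Y =ᶠ[nhds x] Z) :
    tangentialDiv u Y x = tangentialDiv u Z x := by
  have hcomp (a : Fin q) : (fun y => Y y a) =ᶠ[nhds x] fun y => Z y a :=
    h.fun_comp fun w => w a
  simp only [tangentialDiv, partialDerivs, (hcomp _).fderiv_eq]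

theorem sum_dmatLeftInv_mul_entrywiseDeriv_mulVec (hu : ContDiffAt ℝ 2 u x) (w : Fin n → ℝ) :
    ∑ a, ∑ i, dmatLeftInv u x i a *
        (entrywiseDeriv ℝ (Dmat n q u) x (EuclideanSpace.single i 1) *ᵥ w) a =
      ∑ k, w k *
        (dmatLeftInv u x * entrywiseDeriv ℝ (Dmat n q u) x (EuclideanSpace.single k 1)).trace := by
  have hsymm (a : Fin q) (i : Fin n) :
      (entrywiseDeriv ℝ (Dmat n q u) x (EuclideanSpace.single i 1) *ᵥ w) a =
        ∑ k, w k * entrywiseDeriv ℝ (Dmat n q u) x (EuclideanSpace.single k 1) a i := by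
    simp only [Matrix.mulVec, dotProduct, entrywiseDeriv_Dmat_single_comm hu a i, mul_comm]
  simp only [hsymm, Matrix.trace, Matrix.diag, Matrix.mul_apply, Finset.mul_sum, mul_left_comm]
  rw [Finset.sum_comm_cycle]
  exact Finset.sum_congr rfl fun k _ => Finset.sum_comm

theorem sum_dmatLeftInv_mul_Dmat_mulVec (himm : Injective (fderiv ℝ u x))
    (W : Fin n → Fin n → ℝ) :
    ∑ a, ∑ i, dmatLeftInv u x i a * (Dmat n q u x *ᵥ W i) a = ∑ i, W i i := by
  rw [Finset.sum_comm]
  refine Finset.sum_congr rfl fun i _ => ?_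
  change (dmatLeftInv u x *ᵥ (Dmat n q u x *ᵥ W i)) i = W i i
  rw [Matrix.mulVec_mulVec, dmatLeftInv_mul_Dmat himm, Matrix.one_mulVec]

theorem tangentialDiv_Dmat_mulVec (hu : ContDiffAt ℝ 2 u x) (himm : Injective (fderiv ℝ u x))
    {X : EuclideanSpace ℝ (Fin n) → Fin n → ℝ} (hX : DifferentiableAt ℝ X x) :
    tangentialDiv u (fun y => Dmat n q u y *ᵥ X y) x = riemannianDiv (pullbackG n q u) X x := by
  have hDu := differentiableAt_fderiv_of_contDiffAt_two hu
  rw [riemannianDiv_eq_sum_add_sum_trace (differentiableAt_pullbackG_apply hDu)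
    (pullbackG_posDef himm).det_pos hX]
  simp only [tangentialDiv, partialDerivs, fderiv_mulVec_apply (differentiableAt_Dmat_apply hDu) hX,
    mul_add, Finset.sum_add_distrib, half_trace_inv_mul_entrywiseDeriv_pullbackG hDu]
  rw [sum_dmatLeftInv_mul_entrywiseDeriv_mulVec hu, sum_dmatLeftInv_mul_Dmat_mulVec himm, add_comm]

theorem sum_second_tangential_derivatives_eq_laplaceBeltrami_general
    {f : EuclideanSpace ℝ (Fin q) → ℝ} (hu : ContDiffAt ℝ 2 u x)
    (himm : Injective (fderiv ℝ u x)) (hf : ContDiffAt ℝ 2 f (u x)) :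
    ∑ a : Fin q, ∑ i : Fin n,
        (∑ j : Fin n, (pullbackG n q u x)⁻¹ i j * Dmat n q u x a j)
          * fderiv ℝ (fun y => ∑ b : Fin q,
              tangP n q u y b a * fderiv ℝ f (u y) (EuclideanSpace.single b 1)) x
            (EuclideanSpace.single i 1)
      = laplaceBeltrami n (pullbackG n q u) (f ∘ u) x := by
  have hgrad : DifferentiableAt ℝ (riemannianGrad (pullbackG n q u) (f ∘ u)) x :=
    differentiableAt_riemannianGrad
      (differentiableAt_pullbackG_apply (differentiableAt_fderiv_of_contDiffAt_two hu))
      (pullbackG_posDef himm).det_pos.ne'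
      (differentiableAt_fderiv_of_contDiffAt_two (hf.comp x hu))
  have htangent : (fun y => (tangP n q u y)ᵀ *ᵥ partialDerivs f (u y)) =ᶠ[nhds x]
      fun y => Dmat n q u y *ᵥ riemannianGrad (pullbackG n q u) (f ∘ u) y := by
    filter_upwards [hu.eventually (by simp),
      hu.continuousAt.eventually (hf.eventually (by simp))] with y huy hfy
    rw [tangP_isSymm.eq]
    exact tangP_mulVec_partialDerivs (hfy.differentiableAt two_ne_zero)
      (huy.differentiableAt two_ne_zero)
  calc
    _ = tangentialDiv u (fun y => (tangP n q u y)ᵀ *ᵥ partialDerivs f (u y)) x := rfl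
    _ = tangentialDiv u
          (fun y => Dmat n q u y *ᵥ riemannianGrad (pullbackG n q u) (f ∘ u) y) x :=
        tangentialDiv_congr htangent
    _ = riemannianDiv (pullbackG n q u) (riemannianGrad (pullbackG n q u) (f ∘ u)) x :=
        tangentialDiv_Dmat_mulVec hu himm hgrad
    _ = laplaceBeltrami n (pullbackG n q u) (f ∘ u) x :=
        (laplaceBeltrami_eq_riemannianDiv_riemannianGrad _).symm

end Immersion

/-- for a `C^∞` immersion `u : Ω → ℝ^q` with pullback metric `g = (Du)ᵀDu`
and tangential projection `P = Du g⁻¹ Duᵀ`, setting `φ_a(x) = (P(x)e_a)·∇f(u(x))` and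
`v_a(x) = g(x)⁻¹ Du(x)ᵀ e_a`, one has
`Σ_a Σ_i v_a^i ∂_i φ_a = Δ_g (f∘u)` on `Ω`, for every `f ∈ C^∞(ℝ^q)`. -/
theorem sum_second_tangential_derivatives_eq_laplaceBeltrami
    (n q : ℕ) (hn : 1 ≤ n) (hq : 1 ≤ q)
    (Ω : Set (EuclideanSpace ℝ (Fin n)))
    (u : EuclideanSpace ℝ (Fin n) → EuclideanSpace ℝ (Fin q))
    (hΩ : IsOpen Ω)
    (hu : ContDiffOn ℝ (⊤ : ℕ∞) u Ω)
    (huimm : ∀ x ∈ Ω, Function.Injective (fderiv ℝ u x))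
    (f : EuclideanSpace ℝ (Fin q) → ℝ)
    (hf : ContDiff ℝ (⊤ : ℕ∞) f) :
    ∀ x ∈ Ω,
      ∑ a : Fin q, ∑ i : Fin n,
        (∑ j : Fin n, (pullbackG n q u x)⁻¹ i j * Dmat n q u x a j)
          * fderiv ℝ (fun y => ∑ b : Fin q,
              tangP n q u y b a * fderiv ℝ f (u y) (EuclideanSpace.single b 1)) x
            (EuclideanSpace.single i 1)
      = laplaceBeltrami n (pullbackG n q u) (f ∘ u) x := by
  intro x hx
  have hu₂ : ContDiffAt ℝ 2 u x :=
    (hu.contDiffAt (hΩ.mem_nhds hx)).of_le (WithTop.coe_le_coe.2 le_top)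
  exact sum_second_tangential_derivatives_eq_laplaceBeltrami_general hu₂ (huimm x hx)
    (hf.contDiffAt.of_le (WithTop.coe_le_coe.2 le_top))
end

section
/- Let g be a C² field and h a continuous field of symmetric positive-definite n×n matrices on ℝ^n, and assume both are uniformly elliptic: there are 0 < λ ≤ Λ with λ|ξ|² ≤ ξᵀg(x)ξ ≤ Λ|ξ|² and λ|ξ|² ≤ ξᵀh(x)ξ ≤ Λ|ξ|² for all x, ξ ∈ ℝ^n. Suppose that for every x ∈ ℝ^n there exists r > 0 such that d_g(x,y) = d_h(x,y) for all y with |y − x| < r. Then g(x) = h(x) for every x ∈ ℝ^n; that is, a continuous Riemannian metric that induces the same local distance function as a C² metric coincides with it. -/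
open Matrix Function MeasureTheory

/-- The Riemannian length `L_g(γ) = ∫₀¹ √(γ'(t)ᵀ g(γ(t)) γ'(t)) dt` of a curve
`γ : [0,1] → ℝ^n` with respect to a matrix field `g`. -/
noncomputable def curveLength (n : ℕ)
    (g : EuclideanSpace ℝ (Fin n) → Matrix (Fin n) (Fin n) ℝ)
    (γ : ℝ → EuclideanSpace ℝ (Fin n)) : ℝ :=
  ∫ t in (0:ℝ)..1,
    Real.sqrt (∑ i : Fin n, ∑ j : Fin n, deriv γ t i * g (γ t) i j * deriv γ t j)

/-- A curve `γ : [0,1] → ℝ^n` is piecewise `C¹`: it is continuous on `[0,1]` and there is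
a partition `0 = t₀ < t₁ < … < t_m = 1` such that `γ` is `C¹` on each `[t_i, t_{i+1}]`. -/
def PiecewiseC1 (n : ℕ) (γ : ℝ → EuclideanSpace ℝ (Fin n)) : Prop :=
  ContinuousOn γ (Set.Icc 0 1) ∧
  ∃ (m : ℕ) (t : Fin (m + 1) → ℝ), StrictMono t ∧ t 0 = 0 ∧ t (Fin.last m) = 1 ∧
    ∀ i : Fin m, ContDiffOn ℝ 1 γ (Set.Icc (t i.castSucc) (t i.succ))

/-- The Riemannian distance `d_g(x,y)`: the infimum of `L_g(γ)` over piecewise `C¹`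
curves from `x` to `y`. -/
noncomputable def riemDist (n : ℕ)
    (g : EuclideanSpace ℝ (Fin n) → Matrix (Fin n) (Fin n) ℝ)
    (x y : EuclideanSpace ℝ (Fin n)) : ℝ :=
  sInf { L : ℝ | ∃ γ : ℝ → EuclideanSpace ℝ (Fin n),
    PiecewiseC1 n γ ∧ γ 0 = x ∧ γ 1 = y ∧ L = curveLength n g γ }

/- To first order at the diagonal the distance remembers the metric: `d_g(x, y)` is asymptotic to
`|y - x|_{g(x)}` as `y → x`, so the distances from `x` determine the norm of `g(x)` and, by
polarization, `g(x)` itself.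

For the asymptotics, continuity makes all the norms `|·|_{g(z)}` with `z` near `x` comparable to
`|·|_{g(x)}` up to a factor close to `1`. Segments then bound the distance from above. For the
bound from below write `|w|_{g(x)} = ‖T w‖` with `T` linear and invertible. A curve from `x` to `y`
may leave the region where the norms are comparable, but cut at the first time `s` at which
`‖T (γ s - x)‖` reaches `‖T (y - x)‖` it stays there, and it is already long enough. -/

open Set Filter Topology Asymptotics

section QuadraticForm

variable {ι : Type*} [Fintype ι]

theorem sum_sum_mul_mul_eq_dotProduct_mulVec {R : Type*} [CommSemiring R] (A : Matrix ι ι R)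
    (v w : ι → R) : ∑ i, ∑ j, v i * A i j * w j = v ⬝ᵥ A *ᵥ w := by
  simp only [dotProduct, mulVec, Finset.mul_sum, mul_assoc]

theorem posDef_of_mul_sum_sq_le {A : Matrix ι ι ℝ} {lam : ℝ} (hlam : 0 < lam) (hA : A.IsSymm)
    (hell : ∀ ξ : ι → ℝ, lam * ∑ i, ξ i ^ 2 ≤ ∑ i, ∑ j, ξ i * A i j * ξ j) : A.PosDef := by
  refine .of_dotProduct_mulVec_pos (isHermitian_iff_isSymm.2 hA) fun ξ hξ => ?_
  obtain ⟨i, hi⟩ := Function.ne_iff.1 hξ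
  have hsum : 0 < ∑ i, ξ i ^ 2 :=
    Finset.sum_pos' (fun j _ => sq_nonneg (ξ j)) ⟨i, Finset.mem_univ i, sq_pos_of_ne_zero hi⟩
  rw [star_trivial, ← sum_sum_mul_mul_eq_dotProduct_mulVec]
  exact (mul_pos hlam hsum).trans_le (hell ξ)

theorem eq_of_isSymm_of_dotProduct_mulVec_self_eq {A B : Matrix ι ι ℝ} (hA : A.IsSymm)
    (hB : B.IsSymm) (hAB : ∀ ξ : ι → ℝ, ξ ⬝ᵥ A *ᵥ ξ = ξ ⬝ᵥ B *ᵥ ξ) : A = B := by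
  classical
  exact toBilin'.injective <| LinearMap.BilinForm.ext_of_isSymm (isSymm_toBilin'_iff_isSymm.2 hA)
    (isSymm_toBilin'_iff_isSymm.2 hB) fun ξ => by simpa only [toBilin'_apply'] using hAB ξ

/-- The norm `|w|_A = √(wᵀ A w)` of a tangent vector `w` in the inner product with Gram matrix
`A`. -/
noncomputable def metricNorm (A : Matrix ι ι ℝ) (w : EuclideanSpace ℝ ι) : ℝ :=
  √(w ⬝ᵥ A *ᵥ w)

theorem metricNorm_nonneg (A : Matrix ι ι ℝ) (w : EuclideanSpace ℝ ι) : 0 ≤ metricNorm A w :=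
  Real.sqrt_nonneg _

theorem metricNorm_smul (A : Matrix ι ι ℝ) {s : ℝ} (hs : 0 ≤ s) (w : EuclideanSpace ℝ ι) :
    metricNorm A (s • w) = s * metricNorm A w := by
  rw [metricNorm, metricNorm, WithLp.ofLp_smul, mulVec_smul, smul_dotProduct, dotProduct_smul,
    smul_smul, smul_eq_mul, Real.sqrt_mul (mul_self_nonneg s), Real.sqrt_mul_self hs]

theorem continuous_metricNorm :
    Continuous fun p : Matrix ι ι ℝ × EuclideanSpace ℝ ι => metricNorm p.1 p.2 := by
  unfold metricNorm
  fun_prop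

open scoped MatrixOrder Matrix.Norms.L2Operator in
theorem exists_continuousLinearEquiv_norm_eq_metricNorm {A : Matrix ι ι ℝ} (hA : A.PosDef) :
    ∃ T : EuclideanSpace ℝ ι ≃L[ℝ] EuclideanSpace ℝ ι, ∀ w, ‖T w‖ = metricNorm A w := by
  classical
  obtain ⟨B, hB, rfl⟩ :=
    CStarAlgebra.isStrictlyPositive_iff_eq_star_mul_self.1 hA.isStrictlyPositive
  obtain ⟨U, hU⟩ := hB.map (toEuclideanCLM (n := ι) (𝕜 := ℝ))
  refine ⟨ContinuousLinearEquiv.unitsEquiv ℝ _ U, fun w => ?_⟩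
  rw [ContinuousLinearEquiv.unitsEquiv_apply, hU, norm_eq_sqrt_real_inner, metricNorm,
    ← inner_toEuclideanCLM, map_mul, map_star, ContinuousLinearMap.star_eq_adjoint,
    mul_apply_eq_comp, ContinuousLinearMap.adjoint_inner_right]

theorem eventually_forall_metricNorm_le_mul {A : Matrix ι ι ℝ} (hA : A.PosDef) {c : ℝ}
    (hc : 1 < c) :
    ∀ᶠ B in 𝓝 A, ∀ w, metricNorm A w ≤ c * metricNorm B w ∧
      metricNorm B w ≤ c * metricNorm A w := by
  obtain ⟨T, hT⟩ := exists_continuousLinearEquiv_norm_eq_metricNorm hA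
  have hsphere : ∀ᶠ B in 𝓝 A, ∀ u ∈ Metric.sphere (0 : EuclideanSpace ℝ ι) 1,
      metricNorm A u < c * metricNorm B u ∧ metricNorm B u < c * metricNorm A u := by
    refine (isCompact_sphere 0 1).eventually_forall_of_forall_eventually fun u hu => ?_
    have hpos : 0 < metricNorm A u := by
      rw [← hT, norm_pos_iff, map_ne_zero_iff T T.injective]
      exact ne_zero_of_mem_unit_sphere ⟨u, hu⟩
    have hlt : metricNorm A u < c * metricNorm A u := lt_mul_of_one_lt_left hpos hc
    have hBu := (continuous_metricNorm (ι := ι)).continuousAt (x := (A, u))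
    have hAu : ContinuousAt
        (fun p : Matrix ι ι ℝ × EuclideanSpace ℝ ι => metricNorm A p.2) (A, u) :=
      (continuous_metricNorm.comp (continuous_const.prodMk continuous_snd)).continuousAt
    exact (hAu.eventually_lt (hBu.const_mul c) hlt).and (hBu.eventually_lt (hAu.const_mul c) hlt)
  filter_upwards [hsphere] with B hB w
  rcases eq_or_ne w 0 with rfl | hw
  · simp [metricNorm]
  · have hu := hB (‖w‖⁻¹ • w) (by simp [norm_smul, hw])
    have hinv : 0 < ‖w‖⁻¹ := inv_pos.2 (norm_pos_iff.2 hw)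
    rw [metricNorm_smul A hinv.le, metricNorm_smul B hinv.le, mul_left_comm c,
      mul_left_comm c] at hu
    exact hu.imp (fun h => (lt_of_mul_lt_mul_left h hinv.le).le)
      fun h => (lt_of_mul_lt_mul_left h hinv.le).le

end QuadraticForm

section Curves

variable {E : Type*} [NormedAddCommGroup E] [NormedSpace ℝ E]

theorem norm_sub_le_integral_of_norm_deriv_le_off_countable [CompleteSpace E] {f : ℝ → E}
    {φ : ℝ → ℝ} {a b : ℝ} {S : Set ℝ} (hab : a ≤ b) (hS : S.Countable)
    (hf : ContinuousOn f (Icc a b)) (hdiff : ∀ t ∈ Ioo a b \ S, DifferentiableAt ℝ f t)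
    (hle : ∀ t ∈ Ioo a b \ S, ‖deriv f t‖ ≤ φ t) (hφ : IntervalIntegrable φ volume a b) :
    ‖f b - f a‖ ≤ ∫ t in a..b, φ t := by
  have hae : ∀ᵐ t, t ∈ Ioc a b → ‖deriv f t‖ ≤ φ t := by
    filter_upwards [hS.ae_notMem volume, (countable_singleton b).ae_notMem volume] with t htS htb ht
    exact hle t ⟨⟨ht.1, ht.2.lt_of_ne htb⟩, htS⟩
  have hint : IntervalIntegrable (deriv f) volume a b := by
    refine hφ.mono_fun' (aestronglyMeasurable_deriv f _) ?_
    rwa [EventuallyLE, ae_restrict_iff' measurableSet_uIoc, uIoc_of_le hab]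
  rw [← integral_eq_of_hasDerivAt_off_countable_of_le f (deriv f) hab hS hf
    (fun t ht => (hdiff t ht).hasDerivAt) hint]
  exact intervalIntegral.norm_integral_le_of_norm_le hab hae hφ

theorem exists_forall_Ioo_norm_deriv_le {f : ℝ → E} {a b : ℝ} (hab : a < b)
    (hf : ContDiffOn ℝ 1 f (Icc a b)) : ∃ C, ∀ t ∈ Ioo a b, ‖deriv f t‖ ≤ C := by
  obtain ⟨C, hC⟩ := isCompact_Icc.exists_bound_of_continuousOn
    (hf.continuousOn_derivWithin (uniqueDiffOn_Icc hab) le_rfl)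
  refine ⟨C, fun t ht => ?_⟩
  rw [← derivWithin_of_mem_nhds (Icc_mem_nhds ht.1 ht.2)]
  exact hC t (Ioo_subset_Icc_self ht)

theorem exists_mem_Ioo_of_notMem_range {α : Type*} [LinearOrder α] {m : ℕ} {t : Fin (m + 1) → α}
    {s : α} (hs : s ∈ Icc (t 0) (t (Fin.last m))) (hst : s ∉ range t) :
    ∃ i : Fin m, s ∈ Ioo (t i.castSucc) (t i.succ) := by
  have hne : ∀ i, t i ≠ s := fun i hi => hst ⟨i, hi⟩
  by_contra! hgap
  have hlt : ∀ i, t i < s := by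
    intro i
    induction i using Fin.induction with
    | zero => exact hs.1.lt_of_ne (hne 0)
    | succ i ih => exact (not_lt.1 fun h => hgap i ⟨ih, h⟩).lt_of_ne (hne i.succ)
  exact hs.2.not_gt (hlt (Fin.last m))

theorem exists_first_le_of_continuousOn {f : ℝ → ℝ} {a b : ℝ} (hab : a ≤ b)
    (hf : ContinuousOn f (Icc a b)) :
    ∃ s ∈ Icc a b, f b ≤ f s ∧ ∀ t ∈ Ico a s, f t < f b := by
  have hcompact : IsCompact (Icc a b ∩ f ⁻¹' Ici (f b)) :=
    isCompact_Icc.of_isClosed_subset (hf.preimage_isClosed_of_isClosed isClosed_Icc isClosed_Ici)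
      inter_subset_left
  have hb : b ∈ Icc a b ∩ f ⁻¹' Ici (f b) := ⟨right_mem_Icc.2 hab, mem_preimage.2 self_mem_Ici⟩
  obtain ⟨s, ⟨hs, hfs⟩, hmin⟩ := hcompact.exists_isLeast ⟨b, hb⟩
  refine ⟨s, hs, hfs, fun t ht => not_le.1 fun hle => ?_⟩
  exact ht.2.not_ge (hmin ⟨⟨ht.1, ht.2.le.trans hs.2⟩, hle⟩)

theorem tendsto_add_smul_nhdsGT_zero (x v : E) :
    Tendsto (fun s : ℝ => x + s • v) (𝓝[>] 0) (𝓝 x) :=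
  (Continuous.tendsto' (by fun_prop) 0 x (by simp)).mono_left nhdsWithin_le_nhds

end Curves

section RiemannianDistance

variable {n : ℕ} {g : EuclideanSpace ℝ (Fin n) → Matrix (Fin n) (Fin n) ℝ}

theorem curveLength_eq_integral_metricNorm
    (g : EuclideanSpace ℝ (Fin n) → Matrix (Fin n) (Fin n) ℝ) (γ : ℝ → EuclideanSpace ℝ (Fin n)) :
    curveLength n g γ = ∫ t in (0 : ℝ)..1, metricNorm (g (γ t)) (deriv γ t) := by
  simp only [curveLength, metricNorm, sum_sum_mul_mul_eq_dotProduct_mulVec]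

theorem curveLength_nonneg (g : EuclideanSpace ℝ (Fin n) → Matrix (Fin n) (Fin n) ℝ)
    (γ : ℝ → EuclideanSpace ℝ (Fin n)) : 0 ≤ curveLength n g γ :=
  intervalIntegral.integral_nonneg zero_le_one fun _ _ => Real.sqrt_nonneg _

theorem piecewiseC1_of_contDiff {γ : ℝ → EuclideanSpace ℝ (Fin n)} (hγ : ContDiff ℝ 1 γ) :
    PiecewiseC1 n γ := by
  refine ⟨hγ.continuous.continuousOn, 1, fun i => (i : ℝ), fun i j hij => ?_, by simp, by simp,
    fun _ => hγ.contDiffOn⟩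
  simpa using hij

theorem piecewiseC1_lineMap (x y : EuclideanSpace ℝ (Fin n)) :
    PiecewiseC1 n (AffineMap.lineMap x y) := by
  refine piecewiseC1_of_contDiff ?_
  simp only [AffineMap.coe_lineMap, vsub_eq_sub, vadd_eq_add]
  fun_prop

namespace PiecewiseC1

variable {γ : ℝ → EuclideanSpace ℝ (Fin n)}

theorem exists_countable_deriv_bound (hγ : PiecewiseC1 n γ) :
    ∃ S : Set ℝ, S.Countable ∧ ∃ C, ∀ s ∈ Icc (0 : ℝ) 1 \ S,
      DifferentiableAt ℝ γ s ∧ ‖deriv γ s‖ ≤ C := by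
  obtain ⟨-, m, t, ht, ht0, ht1, hC1⟩ := hγ
  choose C hC using fun i : Fin m =>
    exists_forall_Ioo_norm_deriv_le (ht i.castSucc_lt_succ) (hC1 i)
  obtain ⟨K, hK⟩ := (finite_range C).bddAbove
  refine ⟨range t, countable_range t, K, fun s hs => ?_⟩
  obtain ⟨i, hi⟩ := exists_mem_Ioo_of_notMem_range (by rw [ht0, ht1]; exact hs.1) hs.2
  exact ⟨((hC1 i).differentiableOn one_ne_zero).differentiableAt (Icc_mem_nhds hi.1 hi.2),
    (hC i s hi).trans (hK ⟨i, rfl⟩)⟩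

theorem intervalIntegrable_metricNorm (hγ : PiecewiseC1 n γ) (hg : Continuous g) :
    IntervalIntegrable (fun t => metricNorm (g (γ t)) (deriv γ t)) volume 0 1 := by
  have hcont : Continuous fun q : EuclideanSpace ℝ (Fin n) × EuclideanSpace ℝ (Fin n) =>
      metricNorm (g q.1) q.2 :=
    continuous_metricNorm.comp ((hg.comp continuous_fst).prodMk continuous_snd)
  obtain ⟨S, hS, C, hC⟩ := hγ.exists_countable_deriv_bound
  have hcompact := (isCompact_Icc.image_of_continuousOn hγ.1).prod
    (isCompact_closedBall (0 : EuclideanSpace ℝ (Fin n)) C)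
  obtain ⟨M, hM⟩ := hcompact.exists_bound_of_continuousOn hcont.continuousOn
  rw [intervalIntegrable_iff_integrableOn_Icc_of_le zero_le_one]
  refine Integrable.of_bound (hcont.comp_aestronglyMeasurable
    ((hγ.1.aestronglyMeasurable measurableSet_Icc).prodMk (aestronglyMeasurable_deriv γ _))) M ?_
  filter_upwards [ae_restrict_mem measurableSet_Icc,
    ae_restrict_of_ae (hS.ae_notMem volume)] with t ht htS
  exact hM (γ t, deriv γ t)
    ⟨mem_image_of_mem γ ht, mem_closedBall_zero_iff.2 (hC t ⟨ht, htS⟩).2⟩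

theorem norm_clm_sub_le_mul_curveLength {F : Type*} [NormedAddCommGroup F] [NormedSpace ℝ F]
    [CompleteSpace F] (hγ : PiecewiseC1 n γ) (hg : Continuous g)
    (T : EuclideanSpace ℝ (Fin n) →L[ℝ] F) {c s : ℝ} (hc : 0 ≤ c) (hs : s ∈ Icc (0 : ℝ) 1)
    (hT : ∀ t ∈ Ioo 0 s, ∀ w, ‖T w‖ ≤ c * metricNorm (g (γ t)) w) :
    ‖T (γ s) - T (γ 0)‖ ≤ c * curveLength n g γ := by
  obtain ⟨S, hS, C, hC⟩ := hγ.exists_countable_deriv_bound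
  have hsub : Icc 0 s ⊆ Icc 0 1 := Icc_subset_Icc_right hs.2
  have hderiv : ∀ t ∈ Ioo 0 s \ S, HasDerivAt (fun t => T (γ t)) (T (deriv γ t)) t := fun t ht =>
    T.hasFDerivAt.comp_hasDerivAt t (hC t ⟨hsub (Ioo_subset_Icc_self ht.1), ht.2⟩).1.hasDerivAt
  have hint := (hγ.intervalIntegrable_metricNorm hg).const_mul c
  calc ‖T (γ s) - T (γ 0)‖
      ≤ ∫ t in (0 : ℝ)..s, c * metricNorm (g (γ t)) (deriv γ t) := by
        refine norm_sub_le_integral_of_norm_deriv_le_off_countable (f := fun t => T (γ t)) hs.1 hS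
          (T.continuous.comp_continuousOn (hγ.1.mono hsub))
          (fun t ht => (hderiv t ht).differentiableAt) (fun t ht => ?_) (hint.mono_set ?_)
        · rw [(hderiv t ht).deriv]
          exact hT t ht.1 _
        · rwa [uIcc_of_le hs.1, uIcc_of_le zero_le_one]
    _ ≤ ∫ t in (0 : ℝ)..1, c * metricNorm (g (γ t)) (deriv γ t) :=
        intervalIntegral.integral_mono_interval le_rfl hs.1 hs.2
          (Eventually.of_forall fun t => mul_nonneg hc (metricNorm_nonneg _ _)) hint
    _ = c * curveLength n g γ := by
        rw [intervalIntegral.integral_const_mul, curveLength_eq_integral_metricNorm]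

end PiecewiseC1

theorem riemDist_le_curveLength (g : EuclideanSpace ℝ (Fin n) → Matrix (Fin n) (Fin n) ℝ)
    {γ : ℝ → EuclideanSpace ℝ (Fin n)} (hγ : PiecewiseC1 n γ) :
    riemDist n g (γ 0) (γ 1) ≤ curveLength n g γ :=
  csInf_le ⟨0, by rintro _ ⟨γ, -, -, -, rfl⟩; exact curveLength_nonneg g γ⟩ ⟨γ, hγ, rfl, rfl, rfl⟩

theorem le_mul_riemDist {x y : EuclideanSpace ℝ (Fin n)} {a c : ℝ} (hc : 0 < c)
    (ha : ∀ γ, PiecewiseC1 n γ → γ 0 = x → γ 1 = y → a ≤ c * curveLength n g γ) :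
    a ≤ c * riemDist n g x y := by
  rw [← div_le_iff₀' hc]
  refine le_csInf ⟨_, _, piecewiseC1_lineMap x y, AffineMap.lineMap_apply_zero x y,
    AffineMap.lineMap_apply_one x y, rfl⟩ ?_
  rintro _ ⟨γ, hγ, h0, h1, rfl⟩
  exact (div_le_iff₀' hc).2 (ha γ hγ h0 h1)

theorem riemDist_le_of_forall_segment {x y : EuclideanSpace ℝ (Fin n)} {M : ℝ}
    (hM : ∀ z ∈ segment ℝ x y, metricNorm (g z) (y - x) ≤ M) : riemDist n g x y ≤ M := by
  have hdist := riemDist_le_curveLength g (piecewiseC1_lineMap x y)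
  rw [AffineMap.lineMap_apply_zero, AffineMap.lineMap_apply_one] at hdist
  have hline : ‖curveLength n g (AffineMap.lineMap x y)‖ ≤ M * |1 - 0| := by
    rw [curveLength_eq_integral_metricNorm]
    refine intervalIntegral.norm_integral_le_of_norm_le_const fun t ht => ?_
    rw [uIoc_of_le zero_le_one] at ht
    rw [Real.norm_of_nonneg (metricNorm_nonneg _ _), AffineMap.hasDerivAt_lineMap.deriv]
    refine hM _ ?_
    rw [segment_eq_image_lineMap]
    exact mem_image_of_mem _ (Ioc_subset_Icc_self ht)
  rw [sub_zero, abs_one, mul_one] at hline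
  exact hdist.trans ((Real.le_norm_self _).trans hline)

variable {x : EuclideanSpace ℝ (Fin n)}

theorem eventually_riemDist_le_mul_metricNorm (hg : ContinuousAt g x) (hx : (g x).PosDef) {c : ℝ}
    (hc : 1 < c) : ∀ᶠ y in 𝓝 x, riemDist n g x y ≤ c * metricNorm (g x) (y - x) := by
  obtain ⟨δ, hδ, hball⟩ := Metric.eventually_nhds_iff_ball.1
    (hg.eventually (eventually_forall_metricNorm_le_mul hx hc))
  filter_upwards [Metric.ball_mem_nhds x hδ] with y hy
  refine riemDist_le_of_forall_segment fun z hz => (hball z ?_ (y - x)).2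
  exact (convex_ball x δ).segment_subset (Metric.mem_ball_self hδ) hy hz

theorem eventually_metricNorm_le_mul_riemDist (hg : Continuous g) (hx : (g x).PosDef) {c : ℝ}
    (hc : 1 < c) : ∀ᶠ y in 𝓝 x, metricNorm (g x) (y - x) ≤ c * riemDist n g x y := by
  have hc0 : 0 < c := one_pos.trans hc
  obtain ⟨T, hT⟩ := exists_continuousLinearEquiv_norm_eq_metricNorm hx
  have hbasis : (𝓝 x).HasBasis (fun ρ : ℝ => 0 < ρ) fun ρ => T ⁻¹' Metric.ball (T x) ρ := by
    rw [T.toHomeomorph.nhds_eq_comap x]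
    exact Metric.nhds_basis_ball.comap T
  obtain ⟨ρ, hρ, hball⟩ := hbasis.eventually_iff.1
    (hg.continuousAt.eventually (eventually_forall_metricNorm_le_mul hx hc))
  filter_upwards [hbasis.mem_of_mem hρ] with y hy
  rw [mem_preimage, mem_ball_iff_norm] at hy
  refine le_mul_riemDist hc0 fun γ hγ h0 h1 => ?_
  have hcont : ContinuousOn (fun t => ‖T (γ t) - T x‖) (Icc 0 1) :=
    ((T.continuous.comp_continuousOn hγ.1).sub continuousOn_const).norm
  obtain ⟨s, hs, hys, hbefore⟩ := exists_first_le_of_continuousOn zero_le_one hcont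
  rw [h1] at hys hbefore
  have hcomp : ∀ t ∈ Ioo 0 s, ∀ w, ‖T w‖ ≤ c * metricNorm (g (γ t)) w := fun t ht w => by
    have hin : ‖T (γ t) - T x‖ < ρ := (hbefore t (Ioo_subset_Ico_self ht)).trans hy
    exact (hT w).trans_le (hball (mem_preimage.2 (mem_ball_iff_norm.2 hin)) w).1
  calc metricNorm (g x) (y - x) = ‖T y - T x‖ := by rw [← hT, map_sub]
    _ ≤ ‖T (γ s) - T (γ 0)‖ := by rw [h0]; exact hys
    _ ≤ c * curveLength n g γ :=
      hγ.norm_clm_sub_le_mul_curveLength hg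
        (T : EuclideanSpace ℝ (Fin n) →L[ℝ] EuclideanSpace ℝ (Fin n)) hc0.le hs hcomp

theorem isEquivalent_riemDist_metricNorm (hg : Continuous g) (hx : (g x).PosDef) :
    (fun y => riemDist n g x y) ~[𝓝 x] fun y => metricNorm (g x) (y - x) := by
  refine IsLittleO.of_bound fun ε hε => ?_
  have hc : 1 < 1 + ε := lt_add_of_pos_right 1 hε
  filter_upwards [eventually_riemDist_le_mul_metricNorm hg.continuousAt hx hc,
    eventually_metricNorm_le_mul_riemDist hg hx hc] with y hup hlow
  rw [Pi.sub_apply, Real.norm_of_nonneg (metricNorm_nonneg _ _), Real.norm_eq_abs, abs_le]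
  constructor <;> nlinarith [metricNorm_nonneg (g x) (y - x)]

theorem tendsto_riemDist_div (hg : Continuous g) (hx : (g x).PosDef)
    (v : EuclideanSpace ℝ (Fin n)) :
    Tendsto (fun s : ℝ => riemDist n g x (x + s • v) / s) (𝓝[>] 0) (𝓝 (metricNorm (g x) v)) := by
  have hequiv := ((isEquivalent_riemDist_metricNorm hg hx).comp_tendsto
    (tendsto_add_smul_nhdsGT_zero x v)).div (IsEquivalent.refl (u := fun s : ℝ => s))
  refine hequiv.symm.tendsto_nhds (tendsto_const_nhds.congr' ?_)
  filter_upwards [self_mem_nhdsWithin] with s (hs : 0 < s)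
  simp only [Function.comp_apply, add_sub_cancel_left, metricNorm_smul _ hs.le, Pi.div_apply]
  rw [mul_div_cancel_left₀ _ hs.ne']

theorem metric_determined_by_local_distances_general
    {h : EuclideanSpace ℝ (Fin n) → Matrix (Fin n) (Fin n) ℝ}
    (hg : Continuous g) (hh : Continuous h)
    (hgpos : ∀ y, (g y).PosDef) (hhpos : ∀ y, (h y).PosDef)
    (hdist : ∀ᶠ y in 𝓝 x, riemDist n g x y = riemDist n h x y) : g x = h x := by
  have hnorm : ∀ v, metricNorm (g x) v = metricNorm (h x) v := fun v => by
    refine tendsto_nhds_unique_of_eventuallyEq (tendsto_riemDist_div hg (hgpos x) v)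
      (tendsto_riemDist_div hh (hhpos x) v) ?_
    filter_upwards [(tendsto_add_smul_nhdsGT_zero x v).eventually hdist] with s hs
    rw [hs]
  refine eq_of_isSymm_of_dotProduct_mulVec_self_eq (isHermitian_iff_isSymm.1 (hgpos x).1)
    (isHermitian_iff_isSymm.1 (hhpos x).1) fun ξ => ?_
  exact (Real.sqrt_inj ((hgpos x).posSemidef.dotProduct_mulVec_nonneg ξ)
    ((hhpos x).posSemidef.dotProduct_mulVec_nonneg ξ)).1 (hnorm (WithLp.toLp 2 ξ))

end RiemannianDistance

/-- a continuous uniformly elliptic Riemannian metric `h` on `ℝ^n` which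
induces the same local distance function as a `C²` uniformly elliptic metric `g`
coincides with `g`. -/
theorem metric_determined_by_local_distances
    (n : ℕ) (hn : 1 ≤ n) (lam Lam : ℝ) (hlam : 0 < lam) (hlamLam : lam ≤ Lam)
    (g h : EuclideanSpace ℝ (Fin n) → Matrix (Fin n) (Fin n) ℝ)
    (hg : ContDiff ℝ 2 (fun x i j => g x i j))
    (hh : Continuous (fun x i j => h x i j))
    (hgsymm : ∀ x, (g x).IsSymm) (hhsymm : ∀ x, (h x).IsSymm)
    (hgell : ∀ x, ∀ ξ : Fin n → ℝ,
      lam * ∑ i, ξ i ^ 2 ≤ ∑ i, ∑ j, ξ i * g x i j * ξ j ∧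
      ∑ i, ∑ j, ξ i * g x i j * ξ j ≤ Lam * ∑ i, ξ i ^ 2)
    (hhell : ∀ x, ∀ ξ : Fin n → ℝ,
      lam * ∑ i, ξ i ^ 2 ≤ ∑ i, ∑ j, ξ i * h x i j * ξ j ∧
      ∑ i, ∑ j, ξ i * h x i j * ξ j ≤ Lam * ∑ i, ξ i ^ 2)
    (hdist : ∀ x, ∃ r : ℝ, 0 < r ∧
      ∀ y, ‖y - x‖ < r → riemDist n g x y = riemDist n h x y) :
    ∀ x, g x = h x := by
  intro x
  obtain ⟨r, hr, hxr⟩ := hdist x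
  exact metric_determined_by_local_distances_general hg.continuous hh
    (fun y => posDef_of_mul_sum_sq_le hlam (hgsymm y) fun ξ => (hgell y ξ).1)
    (fun y => posDef_of_mul_sum_sq_le hlam (hhsymm y) fun ξ => (hhell y ξ).1)
    (Metric.eventually_nhds_iff_ball.2 ⟨r, hr, fun y hy => hxr y (mem_ball_iff_norm.1 hy)⟩)
end
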